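/- There exist constants a₀, a₁, a₂, a₃, a₄ such that for every ε > 0, one has ∑_{m₁m₂ ≤ x, m₁m₂ a perfect cube} s(m₁,m₂) = x^{2/3}·∑_{j=0}^{4} a_j (log x)^j + O_ε(x^{5/8+ε}) as x → ∞, where the sum is over pairs of positive integers (m₁,m₂) with m₁m₂ ≤ x and m₁m₂ a perfect cube. -/

import Mathlib

open scoped Classical

/-- `numSubgroups m₁ m₂` is the number of subgroups of the additive group
`ℤ_{m₁} × ℤ_{m₂}`. -/
noncomputable def numSubgroups (m₁ m₂ : ℕ) : ℕ :=
  Nat.card (AddSubgroup (ZMod m₁ × ZMod m₂))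

/-- `T₃ x = ∑_{m₁ m₂ ≤ x, m₁ m₂ a perfect cube} s(m₁, m₂)`, the sum over pairs of
positive integers `(m₁, m₂)` with `m₁ m₂ ≤ x` and `m₁ m₂` a perfect cube. -/
noncomputable def T₃ (x : ℝ) : ℕ :=
  ∑ p ∈ (Finset.Icc 1 ⌊x⌋₊ ×ˢ Finset.Icc 1 ⌊x⌋₊).filter
      (fun p => p.1 * p.2 ≤ ⌊x⌋₊ ∧ ∃ n : ℕ, p.1 * p.2 = n ^ 3),
    numSubgroups p.1 p.2

/-! ### Counting subgroups -/

section Subgroups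

/-- The reduction map `ℤ × ℤ → ℤ_m × ℤ_n`. -/
def redHom (m n : ℕ) : ℤ × ℤ →+ ZMod m × ZMod n :=
  (Int.castAddHom (ZMod m)).prodMap (Int.castAddHom (ZMod n))

lemma redHom_surj (m n : ℕ) : Function.Surjective (redHom m n) := by
  rintro ⟨a, b⟩
  obtain ⟨x, hx⟩ := ZMod.intCast_surjective a
  obtain ⟨y, hy⟩ := ZMod.intCast_surjective b
  exact ⟨(x, y), by simp [redHom, hx, hy]⟩

lemma mem_ker_redHom (m n : ℕ) (v : ℤ × ℤ) :
    v ∈ (redHom m n).ker ↔ (m : ℤ) ∣ v.1 ∧ (n : ℤ) ∣ v.2 := by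
  simp [AddMonoidHom.mem_ker, redHom, Prod.ext_iff, ZMod.intCast_zmod_eq_zero_iff_dvd]

/-- The lattice spanned by `(a, c)` and `(0, b)`. -/
def lat (a b c : ℕ) : AddSubgroup (ℤ × ℤ) where
  carrier := {v | ∃ i : ℤ, v.1 = i * a ∧ (b : ℤ) ∣ v.2 - i * c}
  zero_mem' := ⟨0, by simp⟩
  add_mem' := by
    rintro ⟨x, y⟩ ⟨x', y'⟩ ⟨i, hi, hi'⟩ ⟨j, hj, hj'⟩
    refine ⟨i + j, ?_, ?_⟩
    · simp only at hi hj
      simp [hi, hj, add_mul]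
    · have := dvd_add hi' hj'
      simp only [Prod.mk_add_mk]
      convert! this using 1
      ring
  neg_mem' := by
    rintro ⟨x, y⟩ ⟨i, hi, hi'⟩
    refine ⟨-i, ?_, ?_⟩
    · simp only at hi
      simp [hi]
    · have := (dvd_neg (a := (b : ℤ))).2 hi'
      simp only [Prod.neg_mk]
      convert! this using 1
      ring

lemma mem_lat {a b c : ℕ} {v : ℤ × ℤ} :
    v ∈ lat a b c ↔ ∃ i : ℤ, v.1 = i * a ∧ (b : ℤ) ∣ v.2 - i * c := Iff.rfl

/-- Parameters of lattices containing `mℤ × nℤ`. -/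
def params (m n : ℕ) : Finset (ℕ × ℕ × ℕ) :=
  (m.divisors ×ˢ n.divisors ×ˢ Finset.range (n + 1)).filter
    (fun t => t.2.2 < t.2.1 ∧ t.2.1 ∣ (m / t.1) * t.2.2)

lemma mem_params {m n : ℕ} (hm : 0 < m) (hn : 0 < n) {a b c : ℕ} :
    (a, b, c) ∈ params m n ↔ a ∣ m ∧ b ∣ n ∧ c < b ∧ b ∣ (m / a) * c := by
  simp only [params, Finset.mem_filter, Finset.mem_product, Nat.mem_divisors, Finset.mem_range]
  constructor
  · rintro ⟨⟨⟨h1, _⟩, ⟨h2, _⟩, h3⟩, h4, h5⟩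
    exact ⟨h1, h2, h4, h5⟩
  · rintro ⟨h1, h2, h3, h4⟩
    have := Nat.le_of_dvd hn h2
    exact ⟨⟨⟨h1, hm.ne'⟩, ⟨h2, hn.ne'⟩, by lia⟩, h3, h4⟩

lemma lat_ge {m n : ℕ} {a b c : ℕ} (ha : a ∣ m) (hb : b ∣ n) (hc : b ∣ (m / a) * c) :
    (redHom m n).ker ≤ lat a b c := by
  intro v hv
  rw [mem_ker_redHom] at hv
  obtain ⟨⟨k, hk⟩, h2⟩ := hv
  refine ⟨k * (m / a : ℕ), ?_, ?_⟩
  · rw [hk, mul_assoc]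
    norm_cast
    rw [Nat.div_mul_cancel ha]
    ring
  · apply dvd_sub
    · exact (Int.natCast_dvd_natCast.2 hb).trans h2
    · rw [mul_assoc]
      apply Dvd.dvd.mul_left
      exact_mod_cast hc

lemma lat_inj {a b c a' b' c' : ℕ} (ha : 0 < a) (hc : c < b) (ha' : 0 < a') (hc' : c' < b')
    (h : lat a b c = lat a' b' c') : a = a' ∧ b = b' ∧ c = c' := by
  have key : ∀ {a b c a' b' c' : ℕ}, 0 < a → 0 < a' → lat a b c ≤ lat a' b' c' →
      a' ∣ a ∧ b' ∣ b := by
    intro a b c a' b' c' ha ha' h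
    constructor
    · obtain ⟨i, hi, _⟩ := h (show ((a : ℤ), (c : ℤ)) ∈ lat a b c from ⟨1, by simp⟩)
      exact Int.natCast_dvd_natCast.1 ⟨i, by simpa [mul_comm] using hi⟩
    · obtain ⟨i, hi, hi'⟩ := h (show ((0 : ℤ), (b : ℤ)) ∈ lat a b c from ⟨0, by simp⟩)
      have : i = 0 := by
        simpa [ha'.ne'] using hi.symm
      subst this
      simp only [zero_mul, sub_zero] at hi'
      exact_mod_cast hi'
  obtain ⟨h1, h2⟩ := key ha ha' h.le
  obtain ⟨h3, h4⟩ := key ha' ha h.ge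
  have e1 := Nat.dvd_antisymm h3 h1
  have e2 := Nat.dvd_antisymm h4 h2
  subst e1 e2
  refine ⟨rfl, rfl, ?_⟩
  obtain ⟨i, hi, hi'⟩ := h.le (show ((a : ℤ), (c : ℤ)) ∈ lat a b c from ⟨1, by simp⟩)
  have : i = 1 := by
    have h0 : (a : ℤ) ≠ 0 := by exact_mod_cast ha.ne'
    have : (i - 1) * (a : ℤ) = 0 := by simp only at hi; linarith
    rcases mul_eq_zero.1 this with h | h
    · linarith
    · exact absurd h h0
  subst this
  simp only [one_mul] at hi'
  have := (Nat.modEq_iff_dvd (n := b) (a := c') (b := c)).2 (by exact_mod_cast hi')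
  exact (Nat.ModEq.eq_of_lt_of_lt this hc' hc).symm

lemma int_subgroup_nat (H : AddSubgroup ℤ) : ∃ a : ℕ, ∀ x : ℤ, x ∈ H ↔ (a : ℤ) ∣ x := by
  obtain ⟨g, hg⟩ := Int.subgroup_cyclic H
  refine ⟨g.natAbs, fun x => ?_⟩
  rw [hg, ← AddSubgroup.zmultiples_eq_closure, Int.mem_zmultiples_iff, Int.natAbs_dvd]

lemma lat_surj {m n : ℕ} (hm : 0 < m) (hn : 0 < n) (K : AddSubgroup (ℤ × ℤ))
    (hK : (redHom m n).ker ≤ K) :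
    ∃ a b c, (a, b, c) ∈ params m n ∧ lat a b c = K := by
  obtain ⟨a, ha⟩ := int_subgroup_nat (K.map (AddMonoidHom.fst ℤ ℤ))
  obtain ⟨b, hb⟩ := int_subgroup_nat (K.comap (AddMonoidHom.inr ℤ ℤ))
  have ha : ∀ x : ℤ, (∃ y, (x, y) ∈ K) ↔ (a : ℤ) ∣ x := by
    intro x
    rw [← ha]
    simp [AddSubgroup.mem_map]
  have hb : ∀ y : ℤ, (0, y) ∈ K ↔ (b : ℤ) ∣ y := by
    intro y
    rw [← hb]
    simp [AddSubgroup.mem_comap]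
  have hm0 : ((m : ℤ), (0 : ℤ)) ∈ K := hK ((mem_ker_redHom _ _ _).2 ⟨by simp, by simp⟩)
  have hn0 : ((0 : ℤ), (n : ℤ)) ∈ K := hK ((mem_ker_redHom _ _ _).2 ⟨by simp, by simp⟩)
  have ham : a ∣ m := Int.natCast_dvd_natCast.1 ((ha _).1 ⟨_, hm0⟩)
  have hbn : b ∣ n := Int.natCast_dvd_natCast.1 ((hb _).1 hn0)
  have hbpos : 0 < b := Nat.pos_of_dvd_of_pos hbn hn
  have hapos : 0 < a := Nat.pos_of_dvd_of_pos ham hm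
  obtain ⟨y, hy⟩ := (ha a).2 dvd_rfl
  obtain ⟨c, hc, hcy⟩ : ∃ c : ℕ, c < b ∧ (b : ℤ) ∣ y - c := by
    have hb0 : (b : ℤ) ≠ 0 := by exact_mod_cast hbpos.ne'
    have h1 := Int.emod_nonneg y hb0
    have h2 := Int.emod_lt_of_pos y (show (0 : ℤ) < b by exact_mod_cast hbpos)
    refine ⟨(y % b).toNat, by lia, ?_⟩
    rw [Int.toNat_of_nonneg h1]
    exact Int.dvd_self_sub_emod
  have hac : ((a : ℤ), (c : ℤ)) ∈ K := by
    have := K.sub_mem hy ((hb _).2 hcy)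
    simpa using this
  have hmul : ∀ i : ℤ, (i * a, i * c) ∈ K := by
    intro i
    have := K.zsmul_mem hac i
    simpa using this
  refine ⟨a, b, c, (mem_params hm hn).2 ⟨ham, hbn, hc, ?_⟩, ?_⟩
  · have h1 := K.sub_mem (hmul (m / a : ℕ)) hm0
    have h2 : ((m / a : ℕ) : ℤ) * a - m = 0 := by
      norm_cast
      rw [Nat.div_mul_cancel ham]
      simp
    simp only [Prod.mk_sub_mk, h2, sub_zero] at h1
    have := (hb _).1 h1
    exact_mod_cast this
  · ext ⟨u, v⟩
    rw [mem_lat]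
    constructor
    · rintro ⟨i, hi, hi'⟩
      have := K.add_mem (hmul i) ((hb _).2 hi')
      simp only at hi
      rw [hi]
      simpa using this
    · intro huv
      obtain ⟨i, hi⟩ := (ha u).1 ⟨v, huv⟩
      refine ⟨i, by simp [hi, mul_comm], ?_⟩
      have := K.sub_mem huv (hmul i)
      rw [Prod.mk_sub_mk, hi, mul_comm, sub_self] at this
      exact (hb _).1 this

lemma map_inj_of_ker_le {G H : Type*} [AddGroup G] [AddGroup H] (f : G →+ H)
    {K L : AddSubgroup G} (hK : f.ker ≤ K) (hL : f.ker ≤ L) (h : K.map f = L.map f) : K = L := by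
  have := congrArg (AddSubgroup.comap f) h
  rwa [AddSubgroup.comap_map_eq_self hK, AddSubgroup.comap_map_eq_self hL] at this

lemma card_subgroups_eq_params {m n : ℕ} (hm : 0 < m) (hn : 0 < n) :
    numSubgroups m n = (params m n).card := by
  have hbij : Function.Bijective (fun t : {t // t ∈ params m n} =>
      (lat t.1.1 t.1.2.1 t.1.2.2).map (redHom m n)) := by
    constructor
    · rintro ⟨⟨a, b, c⟩, h⟩ ⟨⟨a', b', c'⟩, h'⟩ heq
      have h1 := (mem_params hm hn).1 h
      have h2 := (mem_params hm hn).1 h'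
      have := map_inj_of_ker_le (redHom m n) (lat_ge h1.1 h1.2.1 h1.2.2.2)
        (lat_ge h2.1 h2.2.1 h2.2.2.2) heq
      obtain ⟨r1, r2, r3⟩ := lat_inj (Nat.pos_of_dvd_of_pos h1.1 hm) h1.2.2.1
        (Nat.pos_of_dvd_of_pos h2.1 hm) h2.2.2.1 this
      subst r1 r2 r3
      rfl
    · intro K
      obtain ⟨a, b, c, h, hK⟩ := lat_surj hm hn (K.comap (redHom m n))
        (by intro v hv; rw [AddMonoidHom.mem_ker] at hv; simp [AddSubgroup.mem_comap, hv])
      refine ⟨⟨(a, b, c), h⟩, ?_⟩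
      simp only [hK]
      exact AddSubgroup.map_comap_eq_self_of_surjective (redHom_surj m n) K
  rw [numSubgroups, ← Nat.card_eq_of_bijective _ hbij]
  simp

lemma card_mul_dvd (k b : ℕ) (hb : 0 < b) :
    ((Finset.range b).filter (fun c => b ∣ k * c)).card = Nat.gcd k b := by
  obtain ⟨g, k', b', hg, hco, hk, hb'⟩ := Nat.exists_coprime' (m := k) (n := b)
    (Nat.gcd_pos_of_pos_right k hb)
  have hb0 : 0 < b' := by
    rcases Nat.eq_zero_or_pos b' with h | h
    · subst h; simp at hb'; lia
    · exact h
  have hgcd : Nat.gcd k b = g := by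
    rw [hk, hb', Nat.gcd_mul_right, hco.gcd_eq_one, one_mul]
  rw [hgcd]
  have : (Finset.range b).filter (fun c => b ∣ k * c) = (Finset.range g).image (fun i => b' * i) := by
    ext c
    simp only [Finset.mem_filter, Finset.mem_range, Finset.mem_image]
    constructor
    · rintro ⟨h1, h2⟩
      rw [hb', hk, mul_right_comm] at h2
      have h3 := Nat.dvd_of_mul_dvd_mul_right hg h2
      have h4 := hco.symm.dvd_of_dvd_mul_left h3
      obtain ⟨i, rfl⟩ := h4
      rw [hb'] at h1
      exact ⟨i, lt_of_mul_lt_mul_left h1 (Nat.zero_le _), rfl⟩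
    · rintro ⟨i, hi, rfl⟩
      refine ⟨by rw [hb']; exact Nat.mul_lt_mul_of_pos_left hi hb0, ?_⟩
      rw [hb', hk]
      exact ⟨k' * i, by ring⟩
  rw [this, Finset.card_image_of_injective, Finset.card_range]
  intro i j h
  exact Nat.eq_of_mul_eq_mul_left hb0 h

lemma numSubgroups_eq {m n : ℕ} (hm : 0 < m) (hn : 0 < n) :
    numSubgroups m n = ∑ a ∈ m.divisors, ∑ b ∈ n.divisors, Nat.gcd a b := by
  rw [card_subgroups_eq_params hm hn, ← Nat.sum_div_divisors m]
  rw [params, Finset.card_filter, Finset.sum_product]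
  refine Finset.sum_congr rfl fun a ha => ?_
  rw [Finset.sum_product]
  refine Finset.sum_congr rfl fun b hb => ?_
  have hbn := Nat.dvd_of_mem_divisors hb
  have hbpos := Nat.pos_of_dvd_of_pos hbn hn
  have hble := Nat.le_of_dvd hn hbn
  rw [← card_mul_dvd _ _ hbpos, ← Finset.card_filter]
  congr 1
  ext c
  simp only [Finset.mem_filter, Finset.mem_range]
  constructor
  · rintro ⟨h1, h2, h3⟩
    exact ⟨h2, h3⟩
  · rintro ⟨h1, h2⟩
    exact ⟨by lia, h1, h2⟩

end Subgroups

/-! ### Arithmetic functions -/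

section Arith

open ArithmeticFunction

/-- The function supported on squares with value `g m` at `m²`. -/
noncomputable def sqLift (g : ArithmeticFunction ℝ) : ArithmeticFunction ℝ :=
  ⟨fun n => if IsSquare n then g (Nat.sqrt n) else 0, by simp⟩

lemma sqLift_sq (g : ArithmeticFunction ℝ) (n : ℕ) : sqLift g (n * n) = g n := by
  simp [sqLift, Nat.sqrt_eq]

lemma sqLift_not (g : ArithmeticFunction ℝ) {n : ℕ} (h : ¬ IsSquare n) : sqLift g n = 0 := by
  simp [sqLift, h]

lemma isSquare_of_coprime_mul {m n : ℕ} (h : m.Coprime n) (hs : IsSquare (m * n)) : IsSquare m := by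
  obtain ⟨r, hr⟩ := hs
  obtain ⟨d, hd⟩ := exists_associated_pow_of_mul_eq_pow (a := m) (b := n) (c := r) (k := 2)
    (by rw [Nat.isUnit_iff]; exact h) (by rw [hr, sq])
  rw [associated_iff_eq] at hd
  exact ⟨d, by rw [← hd, sq]⟩

lemma sqLift_mult {g : ArithmeticFunction ℝ} (hg : g.IsMultiplicative) :
    (sqLift g).IsMultiplicative := by
  refine ⟨?_, ?_⟩
  · have := sqLift_sq g 1
    rw [mul_one] at this
    rw [this, hg.map_one]
  · intro m n h
    by_cases hmn : IsSquare (m * n)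
    · obtain ⟨a, rfl⟩ := isSquare_of_coprime_mul h hmn
      obtain ⟨b, rfl⟩ := isSquare_of_coprime_mul h.symm (by rwa [mul_comm])
      rw [show a * a * (b * b) = (a * b) * (a * b) by ring, sqLift_sq, sqLift_sq, sqLift_sq]
      apply hg.map_mul_of_coprime
      exact (Nat.Coprime.coprime_mul_left h).coprime_mul_left_right
    · rw [sqLift_not _ hmn]
      by_cases hm : IsSquare m
      · have hn : ¬ IsSquare n := fun hn => hmn (hm.mul hn)
        rw [sqLift_not _ hn, mul_zero]
      · rw [sqLift_not _ hm, zero_mul]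

lemma sqLift_mul (g h : ArithmeticFunction ℝ) : sqLift g * sqLift h = sqLift (g * h) := by
  ext n
  rw [mul_apply]
  by_cases hn : IsSquare n
  · obtain ⟨r, rfl⟩ := hn
    rw [sqLift_sq, mul_apply]
    symm
    rcases Nat.eq_zero_or_pos r with rfl | hr
    · simp
    apply Finset.sum_of_injOn (fun p : ℕ × ℕ => (p.1 * p.1, p.2 * p.2))
    · rintro ⟨a, b⟩ _ ⟨c, d⟩ _ hh
      simp only [Prod.mk.injEq] at hh
      rw [Prod.mk.injEq]
      exact ⟨Nat.mul_self_inj.1 hh.1, Nat.mul_self_inj.1 hh.2⟩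
    · rintro ⟨a, b⟩ hab
      simp only [Finset.mem_coe, Nat.mem_divisorsAntidiagonal] at hab ⊢
      refine ⟨by rw [← hab.1]; ring, by positivity⟩
    · rintro ⟨a, b⟩ hab hno
      simp only [Nat.mem_divisorsAntidiagonal] at hab
      by_cases ha : IsSquare a
      · by_cases hb : IsSquare b
        · exfalso
          apply hno
          obtain ⟨c, rfl⟩ := ha
          obtain ⟨d, rfl⟩ := hb
          refine ⟨(c, d), ?_, rfl⟩
          simp only [Finset.mem_coe, Nat.mem_divisorsAntidiagonal]
          refine ⟨?_, hr.ne'⟩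
          apply Nat.mul_self_inj.1
          rw [← hab.1]; ring
        · simp [sqLift_not _ hb]
      · simp [sqLift_not _ ha]
    · rintro ⟨a, b⟩ hab
      simp [sqLift_sq]
  · rw [sqLift_not _ hn]
    apply Finset.sum_eq_zero
    rintro ⟨a, b⟩ hab
    simp only [Nat.mem_divisorsAntidiagonal] at hab
    by_cases ha : IsSquare a
    · by_cases hb : IsSquare b
      · exact absurd (hab.1 ▸ ha.mul hb) hn
      · simp [sqLift_not _ hb]
    · simp [sqLift_not _ ha]

lemma sqLift_one : sqLift 1 = 1 := by
  ext n
  by_cases hn : IsSquare n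
  · obtain ⟨r, rfl⟩ := hn
    rw [sqLift_sq, one_apply, one_apply]
    simp
  · rw [sqLift_not _ hn, one_apply, if_neg]
    rintro rfl
    simp at hn

/-- Real-valued totient. -/
noncomputable def phiR : ArithmeticFunction ℝ := ⟨fun n => (Nat.totient n : ℝ), by simp⟩

/-- Real-valued identity. -/
noncomputable def idR : ArithmeticFunction ℝ := ⟨fun n => (n : ℝ), by simp⟩

/-- `n μ(n)`. -/
noncomputable def idMu : ArithmeticFunction ℝ := ⟨fun n => (n : ℝ) * (moebius n : ℝ), by simp⟩

/-- Real zeta. -/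
noncomputable def zetaR : ArithmeticFunction ℝ := (zeta : ArithmeticFunction ℝ)

/-- Real Moebius. -/
noncomputable def muR : ArithmeticFunction ℝ := (moebius : ArithmeticFunction ℝ)

lemma zetaR_apply {n : ℕ} (hn : n ≠ 0) : zetaR n = 1 := by simp [zetaR, hn]

lemma zetaR_mult : zetaR.IsMultiplicative := isMultiplicative_zeta.natCast
lemma muR_mult : muR.IsMultiplicative := isMultiplicative_moebius.intCast

lemma phiR_mult : phiR.IsMultiplicative := by
  refine ⟨by simp [phiR], fun {m n} h => ?_⟩
  simp [phiR, Nat.totient_mul h]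

lemma idR_mult : idR.IsMultiplicative := by
  refine ⟨by simp [idR], fun {m n} h => ?_⟩
  simp [idR]

lemma idMu_mult : idMu.IsMultiplicative := by
  refine ⟨by simp [idMu], fun {m n} h => ?_⟩
  have := isMultiplicative_moebius.map_mul_of_coprime h
  simp only [idMu, coe_mk, this]
  push_cast
  ring

lemma muR_zetaR : muR * zetaR = 1 := by
  exact coe_moebius_mul_coe_zeta

lemma idMu_idR : idMu * idR = 1 := by
  have h := muR_zetaR
  ext n
  rw [mul_apply]
  have h1 := congrArg (fun f => f n) h
  simp only [mul_apply] at h1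
  rcases Nat.eq_zero_or_pos n with rfl | hn
  · simp
  calc ∑ x ∈ n.divisorsAntidiagonal, idMu x.1 * idR x.2
      = ∑ x ∈ n.divisorsAntidiagonal, (n : ℝ) * (muR x.1 * zetaR x.2) := by
        apply Finset.sum_congr rfl
        rintro ⟨a, b⟩ hab
        have hab := Nat.mem_divisorsAntidiagonal.1 hab
        have hb : b ≠ 0 := by rintro rfl; simp at hab; lia
        rw [zetaR_apply hb, ← hab.1]
        simp [idMu, idR, muR]
        ring
    _ = _ := by
        rw [← Finset.mul_sum, h1, one_apply]
        split_ifs with h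
        · simp [h]
        · simp

/-- The divisor-four function. -/
noncomputable def tau4 : ArithmeticFunction ℝ := (zetaR * zetaR) * (zetaR * zetaR)

/-- `A N = ∑_{m₁ m₂ = N} s(m₁, m₂)`. -/
noncomputable def Afun : ArithmeticFunction ℝ := sqLift phiR * tau4

lemma tau4_mult : tau4.IsMultiplicative :=
  (zetaR_mult.mul zetaR_mult).mul (zetaR_mult.mul zetaR_mult)

lemma Afun_mult : Afun.IsMultiplicative := (sqLift_mult phiR_mult).mul tau4_mult

/-- The normalised coefficient `A(n³)/n`. -/
noncomputable def Ffun : ArithmeticFunction ℝ := ⟨fun n => Afun (n ^ 3) / n, by simp⟩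

lemma Ffun_mult : Ffun.IsMultiplicative := by
  refine ⟨by simp [Ffun, Afun_mult.map_one], fun {m n} h => ?_⟩
  simp only [Ffun, coe_mk, mul_pow]
  rw [Afun_mult.map_mul_of_coprime (Nat.Coprime.pow 3 3 h)]
  push_cast
  rw [mul_div_mul_comm]

/-- The convolution cofactor. -/
noncomputable def Gfun : ArithmeticFunction ℝ :=
  Ffun * (((muR * muR) * (muR * muR)) * sqLift idMu)

lemma Gfun_mult : Gfun.IsMultiplicative :=
  Ffun_mult.mul (((muR_mult.mul muR_mult).mul (muR_mult.mul muR_mult)).mul (sqLift_mult idMu_mult))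

/-- The main convolution factor. -/
noncomputable def Mfun : ArithmeticFunction ℝ := tau4 * sqLift idR

lemma Ffun_eq : Ffun = Gfun * Mfun := by
  have h1 : (sqLift idMu) * (sqLift idR) = 1 := by rw [sqLift_mul, idMu_idR, sqLift_one]
  have h2 := muR_zetaR
  calc Ffun = Ffun * (muR * zetaR) * (muR * zetaR) * (muR * zetaR) * (muR * zetaR) *
        ((sqLift idMu) * (sqLift idR)) := by simp [h1, h2]
    _ = _ := by
        simp only [Gfun, Mfun, tau4]
        ring

lemma zz_apply (n : ℕ) : (zetaR * zetaR) n = ∑ _a ∈ n.divisors, (1 : ℝ) := by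
  rw [zetaR, coe_zeta_mul_apply]
  apply Finset.sum_congr rfl
  intro a ha
  exact zetaR_apply (Nat.pos_of_mem_divisors ha).ne'

lemma sum_dvd_divisors {m d : ℕ} (hm : 0 < m) (hd : d ∣ m) :
    (∑ a ∈ m.divisors, if d ∣ a then (1 : ℝ) else 0) = (zetaR * zetaR) (m / d) := by
  rw [zz_apply, ← Finset.sum_filter]
  have hd0 : 0 < d := Nat.pos_of_dvd_of_pos hd hm
  obtain ⟨k, rfl⟩ := hd
  rw [Nat.mul_div_cancel_left _ hd0]
  symm
  apply Finset.sum_nbij' (fun a => d * a) (fun a => a / d)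
  · intro a ha
    simp only [Nat.mem_divisors, Finset.mem_filter] at ha ⊢
    exact ⟨⟨Nat.mul_dvd_mul_left d ha.1, hm.ne'⟩, dvd_mul_right _ _⟩
  · intro a ha
    simp only [Nat.mem_divisors, Finset.mem_filter] at ha ⊢
    obtain ⟨⟨h1, h2⟩, c, rfl⟩ := ha
    rw [Nat.mul_div_cancel_left _ hd0]
    exact ⟨Nat.dvd_of_mul_dvd_mul_left hd0 h1, by rintro rfl; simp at hm⟩
  · intro a ha
    exact Nat.mul_div_cancel_left _ hd0
  · intro a ha
    simp only [Nat.mem_divisors, Finset.mem_filter] at ha ⊢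
    exact Nat.mul_div_cancel' ha.2
  · simp

lemma numSubgroups_eq' {m n : ℕ} (hm : 0 < m) (hn : 0 < n) :
    (numSubgroups m n : ℝ) = ∑ d ∈ (Nat.gcd m n).divisors,
      phiR d * ((zetaR * zetaR) (m / d) * (zetaR * zetaR) (n / d)) := by
  rw [numSubgroups_eq hm hn]
  push_cast
  have h1 : ∀ a ∈ m.divisors, ∀ b ∈ n.divisors, (Nat.gcd a b : ℝ) =
      ∑ d ∈ (Nat.gcd m n).divisors, phiR d *
        ((if d ∣ a then (1 : ℝ) else 0) * (if d ∣ b then (1 : ℝ) else 0)) := by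
    intro a ha b hb
    rw [← Nat.sum_totient (Nat.gcd a b)]
    push_cast
    have ha' := Nat.dvd_of_mem_divisors ha
    have hb' := Nat.dvd_of_mem_divisors hb
    have : (Nat.gcd a b).divisors = (Nat.gcd m n).divisors.filter (fun d => d ∣ a ∧ d ∣ b) := by
      ext d
      simp only [Nat.mem_divisors, Finset.mem_filter, Nat.dvd_gcd_iff]
      have h0 : Nat.gcd a b ≠ 0 := (Nat.gcd_pos_of_pos_left _ (Nat.pos_of_mem_divisors ha)).ne'
      have h0' : Nat.gcd m n ≠ 0 := (Nat.gcd_pos_of_pos_left _ hm).ne'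
      constructor
      · rintro ⟨⟨h1, h2⟩, _⟩
        exact ⟨⟨⟨h1.trans ha', h2.trans hb'⟩, h0'⟩, h1, h2⟩
      · rintro ⟨_, h⟩
        exact ⟨h, h0⟩
    rw [this, Finset.sum_filter]
    apply Finset.sum_congr rfl
    intro d _
    by_cases h1 : d ∣ a <;> by_cases h2 : d ∣ b <;> simp [h1, h2, phiR]
  rw [Finset.sum_congr rfl fun a ha => Finset.sum_congr rfl fun b hb => h1 a ha b hb]
  rw [Finset.sum_congr rfl fun a ha => Finset.sum_comm, Finset.sum_comm]
  apply Finset.sum_congr rfl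
  intro d hd
  have hd' := Nat.dvd_of_mem_divisors hd
  rw [← sum_dvd_divisors hm (hd'.trans (Nat.gcd_dvd_left _ _)),
    ← sum_dvd_divisors hn (hd'.trans (Nat.gcd_dvd_right _ _)), Finset.sum_mul_sum, Finset.mul_sum]
  apply Finset.sum_congr rfl
  intro a _
  rw [Finset.mul_sum]

lemma sum_numSubgroups {N : ℕ} (hN : 0 < N) :
    ∑ p ∈ N.divisorsAntidiagonal, (numSubgroups p.1 p.2 : ℝ) = Afun N := by
  have h1 : ∀ p ∈ N.divisorsAntidiagonal, (numSubgroups p.1 p.2 : ℝ) =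
      ∑ d ∈ (Nat.gcd p.1 p.2).divisors,
        phiR d * ((zetaR * zetaR) (p.1 / d) * (zetaR * zetaR) (p.2 / d)) := by
    rintro ⟨a, b⟩ hp
    have hp := Nat.mem_divisorsAntidiagonal.1 hp
    apply numSubgroups_eq'
    · apply Nat.pos_of_ne_zero; rintro rfl; simp at hp; lia
    · apply Nat.pos_of_ne_zero; rintro rfl; simp at hp; lia
  rw [Finset.sum_congr rfl h1, Afun, mul_apply]
  have h2 : ∀ p ∈ N.divisorsAntidiagonal, sqLift phiR p.1 * tau4 p.2 =
      ∑ q ∈ p.2.divisorsAntidiagonal,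
        sqLift phiR p.1 * ((zetaR * zetaR) q.1 * (zetaR * zetaR) q.2) := by
    intro p _
    rw [tau4, mul_apply, Finset.mul_sum]
  rw [Finset.sum_congr rfl h2, Finset.sum_sigma', Finset.sum_sigma']
  have hmem : ∀ (a b d : ℕ), (⟨(a, b), d⟩ : (_ : ℕ × ℕ) × ℕ) ∈
      (N.divisorsAntidiagonal.sigma fun p => (Nat.gcd p.1 p.2).divisors) →
      ∃ a' b', a = d * a' ∧ b = d * b' ∧ 0 < d ∧ d * d * (a' * b') = N := by
    intro a b d h
    simp only [Finset.mem_sigma, Nat.mem_divisorsAntidiagonal, Nat.mem_divisors,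
      Nat.dvd_gcd_iff] at h
    obtain ⟨⟨h1, h2⟩, ⟨⟨a', ha⟩, ⟨b', hb⟩⟩, h3⟩ := h
    refine ⟨a', b', ha, hb, ?_, ?_⟩
    · apply Nat.pos_of_ne_zero; rintro rfl; simp at ha; subst ha; simp at h1; lia
    · rw [← h1, ha, hb]; ring
  apply Finset.sum_of_injOn (fun x : (_ : ℕ × ℕ) × ℕ =>
    (⟨(x.2 * x.2, N / (x.2 * x.2)), (x.1.1 / x.2, x.1.2 / x.2)⟩ : (_ : ℕ × ℕ) × (ℕ × ℕ)))
  · rintro ⟨⟨a, b⟩, d⟩ hx ⟨⟨u, v⟩, e⟩ hy heq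
    obtain ⟨a', b', rfl, rfl, hd, _⟩ := hmem _ _ _ hx
    obtain ⟨u', v', rfl, rfl, he, _⟩ := hmem _ _ _ hy
    simp only [Sigma.mk.injEq, Prod.mk.injEq, heq_eq_eq, Nat.mul_div_cancel_left _ hd,
      Nat.mul_div_cancel_left _ he] at heq
    obtain ⟨⟨h1, _⟩, rfl, rfl⟩ := heq
    have := Nat.mul_self_inj.1 h1
    subst this
    rfl
  · rintro ⟨⟨a, b⟩, d⟩ hx
    obtain ⟨a', b', rfl, rfl, hd, hN'⟩ := hmem _ _ _ hx
    have h3 : N / (d * d) = a' * b' := by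
      rw [← hN']; exact Nat.mul_div_cancel_left _ (by positivity)
    simp only [Nat.mul_div_cancel_left _ hd, Finset.mem_coe, Finset.mem_sigma,
      Nat.mem_divisorsAntidiagonal, h3]
    refine ⟨⟨hN', hN.ne'⟩, trivial, ?_⟩
    intro h; rw [h] at hN'; simp at hN'; lia
  · rintro ⟨⟨u, v⟩, ⟨a, b⟩⟩ hx hno
    by_cases hu : IsSquare u
    · exfalso
      apply hno
      obtain ⟨d, rfl⟩ := hu
      simp only [Finset.mem_sigma, Nat.mem_divisorsAntidiagonal] at hx
      obtain ⟨⟨h1, _⟩, rfl, h2⟩ := hx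
      have hd : 0 < d := by
        apply Nat.pos_of_ne_zero; rintro rfl; simp at h1; lia
      refine ⟨⟨(d * a, d * b), d⟩, ?_, ?_⟩
      · simp only [Finset.mem_coe, Finset.mem_sigma, Nat.mem_divisorsAntidiagonal,
          Nat.mem_divisors, Nat.dvd_gcd_iff]
        refine ⟨⟨by rw [← h1]; ring, hN.ne'⟩, ⟨dvd_mul_right _ _, dvd_mul_right _ _⟩, ?_⟩
        rw [Nat.gcd_mul_left]
        have : Nat.gcd a b ≠ 0 := by
          intro h; rw [Nat.gcd_eq_zero_iff] at h; simp [h.1] at h2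
        positivity
      · have h3 : N / (d * d) = a * b := by
          rw [← h1]; exact Nat.mul_div_cancel_left _ (by positivity)
        simp [Nat.mul_div_cancel_left _ hd, h3]
    · simp [sqLift_not _ hu]
  · rintro ⟨⟨a, b⟩, d⟩ hx
    simp [sqLift_sq]

end Arith

/-! ### Reduction of `T₃` -/

section Reduction

lemma T3_eq (x : ℝ) (hx : 1 ≤ x) :
    (T₃ x : ℝ) = ∑ n ∈ Finset.Icc 0 ⌊x ^ ((1 : ℝ) / 3)⌋₊, (n : ℝ) * Ffun n := by
  have hx0 : 0 ≤ x := by linarith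
  have hle : ∀ n : ℕ, n ≤ ⌊x ^ ((1 : ℝ) / 3)⌋₊ ↔ n ^ 3 ≤ ⌊x⌋₊ := by
    intro n
    rw [Nat.le_floor_iff (by positivity), Nat.le_floor_iff hx0, one_div,
      Real.le_rpow_inv_iff_of_pos (by positivity) hx0 (by norm_num)]
    norm_cast
  have hset : (Finset.Icc 1 ⌊x⌋₊ ×ˢ Finset.Icc 1 ⌊x⌋₊).filter
      (fun p => p.1 * p.2 ≤ ⌊x⌋₊ ∧ ∃ n : ℕ, p.1 * p.2 = n ^ 3) =
      (Finset.Icc 1 ⌊x ^ ((1 : ℝ) / 3)⌋₊).biUnion (fun n => (n ^ 3).divisorsAntidiagonal) := by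
    ext ⟨a, b⟩
    simp only [Finset.mem_filter, Finset.mem_product, Finset.mem_Icc, Finset.mem_biUnion,
      Nat.mem_divisorsAntidiagonal, hle]
    constructor
    · rintro ⟨⟨⟨ha, _⟩, hb, _⟩, h, n, hn⟩
      have hn0 : n ≠ 0 := by
        rintro rfl
        have : 0 < a * b := by positivity
        simp at hn; lia
      exact ⟨n, ⟨by lia, by rw [← hn]; exact h⟩, hn, by positivity⟩
    · rintro ⟨n, ⟨hn1, hn2⟩, hn, hn0⟩
      have ha : 0 < a := by apply Nat.pos_of_ne_zero; rintro rfl; simp at hn; lia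
      have hb : 0 < b := by apply Nat.pos_of_ne_zero; rintro rfl; simp at hn; lia
      have h1 : a ≤ a * b := Nat.le_mul_of_pos_right a hb
      have h2 : b ≤ a * b := Nat.le_mul_of_pos_left b ha
      exact ⟨⟨⟨ha, by lia⟩, hb, by lia⟩, by lia, n, hn⟩
  rw [T₃, hset, Finset.sum_biUnion]
  · push_cast
    have : Finset.Icc 0 ⌊x ^ ((1 : ℝ) / 3)⌋₊ = insert 0 (Finset.Icc 1 ⌊x ^ ((1 : ℝ) / 3)⌋₊) := by
      ext n
      simp only [Finset.mem_Icc, Finset.mem_insert]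
      lia
    rw [this, Finset.sum_insert (by simp)]
    simp only [Nat.cast_zero, zero_mul, zero_add]
    apply Finset.sum_congr rfl
    intro n hn
    have hn : 0 < n := (Finset.mem_Icc.1 hn).1
    rw [sum_numSubgroups (by positivity)]
    have : (n : ℝ) ≠ 0 := by positivity
    simp only [Ffun, ArithmeticFunction.coe_mk]
    field_simp
  · intro m _ n _ hmn
    simp only [Function.onFun]
    rw [Finset.disjoint_left]
    rintro ⟨a, b⟩ h1 h2
    rw [Nat.mem_divisorsAntidiagonal] at h1 h2
    apply hmn
    exact Nat.pow_left_injective (n := 3) (by lia) (h1.1.symm.trans h2.1)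

end Reduction

/-! ### Bounds at prime powers and summability of the cofactor -/

section PrimePowers

open ArithmeticFunction

lemma pp_mul (f g : ArithmeticFunction ℝ) {p : ℕ} (hp : p.Prime) (k : ℕ) :
    (f * g) (p ^ k) = ∑ i ∈ Finset.range (k + 1), f (p ^ i) * g (p ^ (k - i)) := by
  rw [mul_apply, Nat.sum_divisorsAntidiagonal (fun a b => f a * g b), Nat.sum_divisors_prime_pow hp]
  apply Finset.sum_congr rfl
  intro i hi
  rw [Nat.pow_div (by simpa [Nat.lt_succ_iff] using hi) hp.pos]

/-- Polynomial-type growth bound at prime powers. -/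
def PB (C : ℝ) (D : ℕ) (f : ArithmeticFunction ℝ) : Prop :=
  ∀ p : ℕ, p.Prime → ∀ k : ℕ, |f (p ^ k)| ≤ C * ((k : ℝ) + 1) ^ D * (√(p : ℝ)) ^ k

lemma PB_mul {C C' : ℝ} {D D' : ℕ} {f g : ArithmeticFunction ℝ} (hC : 0 ≤ C) (hC' : 0 ≤ C')
    (hf : PB C D f) (hg : PB C' D' g) : PB (C * C') (D + D' + 1) (f * g) := by
  intro p hp k
  rw [pp_mul f g hp]
  calc |∑ i ∈ Finset.range (k + 1), f (p ^ i) * g (p ^ (k - i))|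
      ≤ ∑ i ∈ Finset.range (k + 1), |f (p ^ i) * g (p ^ (k - i))| := Finset.abs_sum_le_sum_abs _ _
    _ ≤ ∑ i ∈ Finset.range (k + 1), (C * ((k : ℝ) + 1) ^ D) * (C' * ((k : ℝ) + 1) ^ D') *
        (√(p : ℝ)) ^ k := by
        apply Finset.sum_le_sum
        intro i hi
        have hi : i ≤ k := by simpa [Nat.lt_succ_iff] using hi
        rw [abs_mul]
        have h1 := hf p hp i
        have h2 := hg p hp (k - i)
        have e1 : ((i : ℝ) + 1) ^ D ≤ ((k : ℝ) + 1) ^ D := by gcongr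
        have e2 : (((k - i : ℕ) : ℝ) + 1) ^ D' ≤ ((k : ℝ) + 1) ^ D' := by gcongr; lia
        calc |f (p ^ i)| * |g (p ^ (k - i))| ≤ (C * ((i : ℝ) + 1) ^ D * (√(p : ℝ)) ^ i) *
              (C' * (((k - i : ℕ) : ℝ) + 1) ^ D' * (√(p : ℝ)) ^ (k - i)) := by gcongr
          _ ≤ (C * ((k : ℝ) + 1) ^ D * (√(p : ℝ)) ^ i) *
              (C' * ((k : ℝ) + 1) ^ D' * (√(p : ℝ)) ^ (k - i)) := by gcongr
          _ = (C * ((k : ℝ) + 1) ^ D) * (C' * ((k : ℝ) + 1) ^ D') *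
              ((√(p : ℝ)) ^ i * (√(p : ℝ)) ^ (k - i)) := by ring
          _ = _ := by rw [← pow_add, Nat.add_sub_cancel' hi]
    _ = _ := by
        rw [Finset.sum_const, Finset.card_range, nsmul_eq_mul]
        push_cast
        ring

lemma one_le_sqrt_pow {p : ℕ} (hp : p.Prime) (k : ℕ) : 1 ≤ (√(p : ℝ)) ^ k := by
  apply one_le_pow₀
  rw [Real.one_le_sqrt]
  exact_mod_cast hp.one_lt.le

lemma PB_zeta : PB 1 0 zetaR := by
  intro p hp k
  rw [zetaR_apply (pow_ne_zero _ hp.ne_zero)]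
  simpa using one_le_sqrt_pow hp k

lemma PB_mu : PB 1 0 muR := by
  intro p hp k
  have h1 : |muR (p ^ k)| ≤ 1 := by
    have := abs_moebius_le_one (n := p ^ k)
    simp only [muR, intCoe_apply]
    exact_mod_cast this
  have := one_le_sqrt_pow hp k
  simp only [pow_zero, mul_one, one_mul]
  linarith

lemma PB_sqLift {g : ArithmeticFunction ℝ} (hg : ∀ n : ℕ, |g n| ≤ n) : PB 1 0 (sqLift g) := by
  intro p hp k
  by_cases h : IsSquare (p ^ k)
  · obtain ⟨r, hr⟩ := h
    rw [hr, sqLift_sq]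
    have : (√(p : ℝ)) ^ k = r := by
      have h1 : ((√(p : ℝ)) ^ k) ^ 2 = (r : ℝ) ^ 2 := by
        rw [← pow_mul, mul_comm k 2, pow_mul, Real.sq_sqrt (by positivity)]
        rw [sq]
        exact_mod_cast hr
      exact (pow_left_inj₀ (by positivity) (by positivity) (by norm_num)).1 h1
    rw [this]
    simpa using hg r
  · rw [sqLift_not _ h]
    simp

lemma PB_tau4 : PB 1 3 tau4 := by
  have h1 := PB_mul zero_le_one zero_le_one PB_zeta PB_zeta
  have h2 := PB_mul (by norm_num) (by norm_num) h1 h1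
  simpa [tau4] using h2

lemma PB_A : PB 1 4 Afun := by
  have h1 : PB 1 0 (sqLift phiR) := by
    apply PB_sqLift
    intro n
    simp only [phiR, coe_mk, Nat.abs_cast]
    exact_mod_cast Nat.totient_le n
  have := PB_mul zero_le_one zero_le_one h1 PB_tau4
  simpa [Afun] using this

lemma PB_F : PB 81 4 Ffun := by
  intro p hp k
  have hp0 : (0 : ℝ) < p := by exact_mod_cast hp.pos
  have h := PB_A p hp (3 * k)
  simp only [Ffun, coe_mk]
  rw [← pow_mul, mul_comm k 3, abs_div, Nat.abs_cast]
  rw [div_le_iff₀ (by exact_mod_cast pow_pos hp.pos k)]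
  refine h.trans ?_
  have e1 : (p : ℝ) ^ k = (√(p : ℝ)) ^ (2 * k) := by
    rw [pow_mul, Real.sq_sqrt hp0.le]
  push_cast
  rw [e1, mul_assoc (81 * ((k : ℝ) + 1) ^ 4), ← pow_add, show k + 2 * k = 3 * k by ring]
  gcongr ?_ * _
  calc 1 * (3 * (k : ℝ) + 1) ^ 4 ≤ (3 * ((k : ℝ) + 1)) ^ 4 := by
        rw [one_mul]; gcongr; linarith
    _ = _ := by ring

lemma PB_G : PB 81 9 Gfun := by
  have h1 : PB 1 0 (sqLift idMu) := by
    apply PB_sqLift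
    intro n
    simp only [idMu, coe_mk, abs_mul, Nat.abs_cast]
    have : |(moebius n : ℝ)| ≤ 1 := by exact_mod_cast abs_moebius_le_one (n := n)
    have h0 : (0 : ℝ) ≤ n := by positivity
    nlinarith
  have h2 := PB_mul zero_le_one zero_le_one PB_mu PB_mu
  have h3 := PB_mul (by norm_num) (by norm_num) h2 h2
  have h4 := PB_mul (by norm_num) (by norm_num) h3 h1
  have h5 := PB_mul (by norm_num) (by norm_num) PB_F h4
  simpa [Gfun] using h5

lemma not_sq_prime_pow {p : ℕ} (hp : p.Prime) (j : ℕ) : ¬ IsSquare (p ^ (2 * j + 1)) := by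
  rintro ⟨r, hr⟩
  have h := congrArg (fun n => n.factorization p) hr
  have hr0 : r ≠ 0 := by
    rintro rfl
    simp [hp.ne_zero] at hr
  simp only [hp.factorization_pow, Finsupp.single_eq_same, Nat.factorization_mul hr0 hr0,
    Finsupp.add_apply] at h
  lia

lemma sqLift_even (g : ArithmeticFunction ℝ) {p : ℕ} (j : ℕ) :
    sqLift g (p ^ (2 * j)) = g (p ^ j) := by
  rw [two_mul, pow_add, sqLift_sq]

lemma zeta_pp {p : ℕ} (hp : p.Prime) (k : ℕ) : zetaR (p ^ k) = 1 :=
  zetaR_apply (pow_ne_zero _ hp.ne_zero)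

lemma mu_pp0 {p : ℕ} : muR (p ^ 0) = 1 := by simp [muR]
lemma mu_pp1 {p : ℕ} (hp : p.Prime) : muR (p ^ 1) = -1 := by
  simp [muR, moebius_apply_prime hp]
lemma mu_pp2 {p : ℕ} (hp : p.Prime) : muR (p ^ 2) = 0 := by
  simp [muR, moebius_apply_prime_pow hp]

lemma A_p3 {p : ℕ} (hp : p.Prime) : Afun (p ^ 3) = 20 + 4 * ((p : ℝ) - 1) := by
  have s0 : sqLift phiR (p ^ 0) = 1 := by
    have := sqLift_even phiR (p := p) 0
    rw [mul_zero] at this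
    rw [this]; simp [phiR]
  have s1 : sqLift phiR (p ^ 1) = 0 := sqLift_not _ (not_sq_prime_pow hp 0)
  have s2 : sqLift phiR (p ^ 2) = (p : ℝ) - 1 := by
    have := sqLift_even phiR (p := p) 1
    rw [mul_one] at this
    rw [this]
    have h1 := hp.one_lt.le
    simp [phiR, Nat.totient_prime hp, Nat.cast_sub h1]
  have s3 : sqLift phiR (p ^ 3) = 0 := sqLift_not _ (not_sq_prime_pow hp 1)
  rw [Afun, pp_mul _ _ hp]
  simp only [tau4, Finset.sum_range_succ, Finset.sum_range_zero, pp_mul _ _ hp, zeta_pp hp,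
    s0, s1, s2, s3]
  norm_num
  ring

lemma A_p6 {p : ℕ} (hp : p.Prime) : Afun (p ^ 6) =
    84 + 35 * ((p : ℝ) - 1) + 10 * (p * ((p : ℝ) - 1)) + p ^ 2 * ((p : ℝ) - 1) := by
  have h1 := hp.one_lt.le
  have s0 : sqLift phiR (p ^ 0) = 1 := by
    have := sqLift_even phiR (p := p) 0
    rw [mul_zero] at this
    rw [this]; simp [phiR]
  have s1 : sqLift phiR (p ^ 1) = 0 := sqLift_not _ (not_sq_prime_pow hp 0)
  have s2 : sqLift phiR (p ^ 2) = (p : ℝ) - 1 := by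
    have := sqLift_even phiR (p := p) 1
    rw [mul_one] at this
    rw [this]
    simp [phiR, Nat.totient_prime hp, Nat.cast_sub h1]
  have s3 : sqLift phiR (p ^ 3) = 0 := sqLift_not _ (not_sq_prime_pow hp 1)
  have s4 : sqLift phiR (p ^ 4) = p * ((p : ℝ) - 1) := by
    have := sqLift_even phiR (p := p) 2
    rw [this]
    simp [phiR, Nat.totient_prime_pow hp, Nat.cast_sub h1]
  have s5 : sqLift phiR (p ^ 5) = 0 := sqLift_not _ (not_sq_prime_pow hp 2)
  have s6 : sqLift phiR (p ^ 6) = p ^ 2 * ((p : ℝ) - 1) := by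
    have := sqLift_even phiR (p := p) 3
    rw [this]
    simp [phiR, Nat.totient_prime_pow hp, Nat.cast_sub h1]
  rw [Afun, pp_mul _ _ hp]
  simp only [tau4, Finset.sum_range_succ, Finset.sum_range_zero, pp_mul _ _ hp, zeta_pp hp,
    s0, s1, s2, s3, s4, s5, s6]
  norm_num
  ring

lemma F_p0 {p : ℕ} : Ffun (p ^ 0) = 1 := by
  rw [pow_zero, Ffun_mult.map_one]

lemma F_p1 {p : ℕ} (hp : p.Prime) : Ffun (p ^ 1) = 4 + 16 / p := by
  have hp0 : (0 : ℝ) < p := by exact_mod_cast hp.pos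
  simp only [Ffun, coe_mk, pow_one, A_p3 hp]
  field_simp
  ring

lemma F_p2 {p : ℕ} (hp : p.Prime) : Ffun (p ^ 2) = p + 9 + 25 / p + 49 / p ^ 2 := by
  have hp0 : (0 : ℝ) < p := by exact_mod_cast hp.pos
  simp only [Ffun, coe_mk, ← pow_mul, A_p6 hp]
  push_cast
  field_simp
  ring

lemma G_p1 {p : ℕ} (hp : p.Prime) : Gfun (p ^ 1) = 16 / p := by
  have s0 : sqLift idMu (p ^ 0) = 1 := by
    have := sqLift_even idMu (p := p) 0
    rw [mul_zero] at this
    rw [this]; simp [idMu]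
  have s1 : sqLift idMu (p ^ 1) = 0 := sqLift_not _ (not_sq_prime_pow hp 0)
  rw [Gfun, pp_mul _ _ hp]
  simp only [Finset.sum_range_succ, Finset.sum_range_zero, pp_mul _ _ hp, Nat.sub_self, Nat.sub_zero,
    s0, s1, F_p0, F_p1 hp, mu_pp0, mu_pp1 hp]
  ring

lemma G_p2 {p : ℕ} (hp : p.Prime) : Gfun (p ^ 2) = -1 - 39 / p + 49 / p ^ 2 := by
  have s0 : sqLift idMu (p ^ 0) = 1 := by
    have := sqLift_even idMu (p := p) 0
    rw [mul_zero] at this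
    rw [this]; simp [idMu]
  have s1 : sqLift idMu (p ^ 1) = 0 := sqLift_not _ (not_sq_prime_pow hp 0)
  have s2 : sqLift idMu (p ^ 2) = -p := by
    have := sqLift_even idMu (p := p) 1
    rw [mul_one] at this
    rw [this]; simp [idMu, moebius_apply_prime hp]
  rw [Gfun, pp_mul _ _ hp]
  simp only [Finset.sum_range_succ, Finset.sum_range_zero, pp_mul _ _ hp, Nat.sub_self, Nat.sub_zero,
    s0, s1, s2, F_p0, F_p1 hp, F_p2 hp, mu_pp0, mu_pp1 hp, mu_pp2 hp,
    show 2 - 1 = 1 from rfl]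
  ring

end PrimePowers

section Summability

lemma summable_of_mult (u : ℕ → ℝ) (hu : ∀ n, 0 ≤ u n) (hu1 : u 1 = 1)
    (hmul : ∀ {m n : ℕ}, m.Coprime n → u (m * n) = u m * u n)
    (s : ℝ) (hs : 1 < s) (W : ℕ → ℝ) (hW : ∀ k, 0 ≤ W k) (hWs : Summable W)
    (hb : ∀ p : ℕ, p.Prime → ∀ k : ℕ, 1 ≤ k → u (p ^ k) ≤ (p : ℝ) ^ (-s) * W k) :
    Summable u := by
  have hps : ∀ p : ℕ, p.Prime → Summable (fun k => u (p ^ k)) := by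
    intro p hp
    rw [← summable_nat_add_iff 1]
    apply Summable.of_nonneg_of_le (fun k => hu _) (fun k => hb p hp (k + 1) (by lia))
    exact ((summable_nat_add_iff 1).2 hWs).mul_left _
  have htp : ∀ p : ℕ, p.Prime → ∑' k, u (p ^ k) ≤ Real.exp ((p : ℝ) ^ (-s) * ∑' k, W k) := by
    intro p hp
    rw [(hps p hp).tsum_eq_zero_add, pow_zero, hu1]
    have h1 : ∑' k, u (p ^ (k + 1)) ≤ ∑' k, (p : ℝ) ^ (-s) * W (k + 1) := by
      apply Summable.tsum_le_tsum (fun k => hb p hp (k + 1) (by lia))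
      · exact (summable_nat_add_iff (f := fun k => u (p ^ k)) 1).2 (hps p hp)
      · exact ((summable_nat_add_iff 1).2 hWs).mul_left _
    have h2 : ∑' k, W (k + 1) ≤ ∑' k, W k := by
      rw [hWs.tsum_eq_zero_add]
      linarith [hW 0]
    rw [tsum_mul_left] at h1
    have h3 : (p : ℝ) ^ (-s) * ∑' k, W (k + 1) ≤ (p : ℝ) ^ (-s) * ∑' k, W k := by gcongr
    have h4 := Real.add_one_le_exp ((p : ℝ) ^ (-s) * ∑' k, W k)
    linarith
  have hsum : Summable (fun n : ℕ => (n : ℝ) ^ (-s)) := by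
    rw [Real.summable_nat_rpow]; linarith
  have hW0 : 0 ≤ ∑' k, W k := tsum_nonneg hW
  apply summable_of_sum_range_le (c := u 0 + Real.exp ((∑' n : ℕ, (n : ℝ) ^ (-s)) * ∑' k, W k)) hu
  intro N
  obtain ⟨h1, h2⟩ := EulerProduct.summable_and_hasSum_smoothNumbers_prod_primesBelow_tsum
    (f := u) hu1 hmul (by
      intro p hp
      simpa [abs_of_nonneg (hu _)] using hps p hp) N
  have h3 : ∑ n ∈ Finset.range N, u n ≤ u 0 + ∑' m : N.smoothNumbers, u m := by
    have : Finset.range N ⊆ insert 0 (Finset.Ico 1 N) := by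
      intro n hn
      simp only [Finset.mem_range, Finset.mem_insert, Finset.mem_Ico] at hn ⊢
      lia
    refine (Finset.sum_le_sum_of_subset_of_nonneg this (fun _ _ _ => hu _)).trans ?_
    rw [Finset.sum_insert (by simp)]
    gcongr
    have hmem : ∀ n ∈ Finset.Ico 1 N, n ∈ N.smoothNumbers := by
      intro n hn
      rw [Finset.mem_Ico] at hn
      exact Nat.mem_smoothNumbers_of_lt hn.1 hn.2
    have hind : ∑' m : N.smoothNumbers, u m = ∑' m, (N.smoothNumbers).indicator u m :=
      tsum_subtype _ _
    have hsi : Summable ((N.smoothNumbers).indicator u) := by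
      rw [← summable_subtype_iff_indicator]
      exact h2.summable
    rw [hind]
    calc ∑ n ∈ Finset.Ico 1 N, u n = ∑ n ∈ Finset.Ico 1 N, (N.smoothNumbers).indicator u n := by
          apply Finset.sum_congr rfl
          intro n hn
          rw [Set.indicator_of_mem (hmem n hn)]
      _ ≤ _ := hsi.sum_le_tsum _ (fun n _ => Set.indicator_nonneg (fun _ _ => hu _) n)
  refine h3.trans ?_
  gcongr
  rw [h2.tsum_eq]
  calc ∏ p ∈ N.primesBelow, ∑' k, u (p ^ k)
      ≤ ∏ p ∈ N.primesBelow, Real.exp ((p : ℝ) ^ (-s) * ∑' k, W k) := by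
        apply Finset.prod_le_prod
        · intro p _
          exact tsum_nonneg (fun _ => hu _)
        · intro p hp
          exact htp p (Nat.prime_of_mem_primesBelow hp)
    _ = Real.exp ((∑ p ∈ N.primesBelow, (p : ℝ) ^ (-s)) * ∑' k, W k) := by
        rw [← Real.exp_sum, Finset.sum_mul]
    _ ≤ _ := by
        gcongr
        exact hsum.sum_le_tsum _ (fun n _ => by positivity)

lemma G_bound {p : ℕ} (hp : p.Prime) {k : ℕ} (hk : 1 ≤ k) :
    |Gfun (p ^ k)| * ((p ^ k : ℕ) : ℝ) ^ (-(7 / 8) : ℝ) ≤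
      (p : ℝ) ^ (-(9 / 8) : ℝ) * (1000 * (((k : ℝ) + 1) ^ 9 * ((2 : ℝ) ^ (-(3 / 8) : ℝ)) ^ k)) := by
  have hp2 : (2 : ℝ) ≤ p := by exact_mod_cast hp.two_le
  have hp0 : (0 : ℝ) < p := by linarith
  have hp1 : (1 : ℝ) ≤ p := by linarith
  have hpk : ((p ^ k : ℕ) : ℝ) ^ (-(7 / 8) : ℝ) = (p : ℝ) ^ (-(7 / 8) * k : ℝ) := by
    push_cast
    rw [← Real.rpow_natCast, ← Real.rpow_mul hp0.le]
    ring_nf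
  have h2k : ((2 : ℝ) ^ (-(3 / 8) : ℝ)) ^ k = (2 : ℝ) ^ (-(3 / 8) * k : ℝ) := by
    rw [Real.rpow_mul_natCast (by norm_num)]
  have quarter : (1 : ℝ) / 4 ≤ (2 : ℝ) ^ (-(9 / 8) : ℝ) := by
    have : (2 : ℝ) ^ (-2 : ℝ) ≤ (2 : ℝ) ^ (-(9 / 8) : ℝ) :=
      Real.rpow_le_rpow_of_exponent_le (by norm_num) (by norm_num)
    rw [Real.rpow_neg (by norm_num)] at this
    norm_num at this ⊢
    linarith
  rw [hpk, h2k]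
  obtain rfl | rfl | hk3 : k = 1 ∨ k = 2 ∨ 3 ≤ k := by lia
  · have hG : |Gfun (p ^ 1)| ≤ 16 := by
      rw [G_p1 hp, abs_of_nonneg (by positivity), div_le_iff₀ hp0]
      linarith
    have hG' : |Gfun (p ^ 1)| = 16 * (p : ℝ) ^ (-1 : ℝ) := by
      rw [G_p1 hp, abs_of_nonneg (by positivity), Real.rpow_neg_one]; rfl
    have h1 : (2 : ℝ) ^ (-(9 / 8) : ℝ) ≤ (2 : ℝ) ^ (-(3 / 8) * (1 : ℕ) : ℝ) :=
      Real.rpow_le_rpow_of_exponent_le (by norm_num) (by norm_num)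
    rw [hG', mul_assoc, ← Real.rpow_add hp0]
    have h2 : (p : ℝ) ^ (-1 + -(7 / 8) * (1 : ℕ) : ℝ) ≤ (p : ℝ) ^ (-(9 / 8) : ℝ) :=
      Real.rpow_le_rpow_of_exponent_le hp1 (by norm_num)
    calc _ ≤ 16 * (p : ℝ) ^ (-(9 / 8) : ℝ) := by gcongr
      _ = (p : ℝ) ^ (-(9 / 8) : ℝ) * 16 := by ring
      _ ≤ _ := by
        gcongr
        push_cast at h1 ⊢
        nlinarith
  · have hG : |Gfun (p ^ 2)| ≤ 100 := by
      rw [G_p2 hp]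
      have e1 : 39 / (p : ℝ) ≤ 39 := by rw [div_le_iff₀ hp0]; linarith
      have e2 : 49 / (p : ℝ) ^ 2 ≤ 49 := by rw [div_le_iff₀ (by positivity)]; nlinarith
      have e3 : 0 ≤ 39 / (p : ℝ) := by positivity
      have e4 : 0 ≤ 49 / (p : ℝ) ^ 2 := by positivity
      rw [abs_le]
      constructor <;> linarith
    have h1 : (2 : ℝ) ^ (-(9 / 8) : ℝ) ≤ (2 : ℝ) ^ (-(3 / 8) * (2 : ℕ) : ℝ) :=
      Real.rpow_le_rpow_of_exponent_le (by norm_num) (by norm_num)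
    have h2 : (p : ℝ) ^ (-(7 / 8) * (2 : ℕ) : ℝ) ≤ (p : ℝ) ^ (-(9 / 8) : ℝ) :=
      Real.rpow_le_rpow_of_exponent_le hp1 (by norm_num)
    calc _ ≤ 100 * (p : ℝ) ^ (-(9 / 8) : ℝ) := by gcongr
      _ = (p : ℝ) ^ (-(9 / 8) : ℝ) * 100 := by ring
      _ ≤ _ := by
        gcongr
        push_cast at h1 ⊢
        nlinarith
  · have hG := PB_G p hp k
    have hs : (√(p : ℝ)) ^ k = (p : ℝ) ^ ((1 / 2) * k : ℝ) := by
      rw [Real.sqrt_eq_rpow, Real.rpow_mul_natCast hp0.le]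
    have hk3' : (3 : ℝ) ≤ k := by exact_mod_cast hk3
    have h3 : (p : ℝ) ^ (-(3 / 8) * ((k : ℝ) - 3)) ≤ (2 : ℝ) ^ (-(3 / 8) * ((k : ℝ) - 3)) :=
      Real.rpow_le_rpow_of_nonpos (by norm_num) hp2 (by nlinarith)
    have h4 : (2 : ℝ) ^ (-(3 / 8) * ((k : ℝ) - 3)) * (2 : ℝ) ^ (-(9 / 8) : ℝ)
        = (2 : ℝ) ^ (-(3 / 8) * k : ℝ) := by
      rw [← Real.rpow_add (by norm_num)]; ring_nf
    have h5 : (2 : ℝ) ^ (-(3 / 8) * ((k : ℝ) - 3)) ≤ 4 * (2 : ℝ) ^ (-(3 / 8) * k : ℝ) := by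
      rw [← h4]
      have : 0 < (2 : ℝ) ^ (-(3 / 8) * ((k : ℝ) - 3)) := by positivity
      nlinarith
    calc _ ≤ (81 * ((k : ℝ) + 1) ^ 9 * (√(p : ℝ)) ^ k) * (p : ℝ) ^ (-(7 / 8) * k : ℝ) := by gcongr
      _ = (p : ℝ) ^ (-(9 / 8) : ℝ) * (81 * ((k : ℝ) + 1) ^ 9 *
            (p : ℝ) ^ (-(3 / 8) * ((k : ℝ) - 3))) := by
          have : (√(p : ℝ)) ^ k * (p : ℝ) ^ (-(7 / 8) * k : ℝ) =
              (p : ℝ) ^ (-(9 / 8) : ℝ) * (p : ℝ) ^ (-(3 / 8) * ((k : ℝ) - 3)) := by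
            rw [hs, ← Real.rpow_add hp0, ← Real.rpow_add hp0]
            ring_nf
          linear_combination (81 * ((k : ℝ) + 1) ^ 9) * this
      _ ≤ (p : ℝ) ^ (-(9 / 8) : ℝ) * (81 * ((k : ℝ) + 1) ^ 9 *
            (4 * (2 : ℝ) ^ (-(3 / 8) * k : ℝ))) := by
          gcongr
          exact h3.trans h5
      _ ≤ _ := by
          gcongr ?_ * ?_
          have : 0 ≤ ((k : ℝ) + 1) ^ 9 * (2 : ℝ) ^ (-(3 / 8) * k : ℝ) := by positivity
          nlinarith

lemma G_summable : Summable (fun n : ℕ => |Gfun n| * (n : ℝ) ^ (-(7 / 8) : ℝ)) := by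
  have hr : (2 : ℝ) ^ (-(3 / 8) : ℝ) < 1 :=
    Real.rpow_lt_one_of_one_lt_of_neg (by norm_num) (by norm_num)
  have hr0 : 0 < (2 : ℝ) ^ (-(3 / 8) : ℝ) := by positivity
  apply summable_of_mult _ (fun n => by positivity) (by simp [Gfun_mult.map_one]) ?_ (9 / 8)
    (by norm_num)
    (fun k => 1000 * (((k : ℝ) + 1) ^ 9 * ((2 : ℝ) ^ (-(3 / 8) : ℝ)) ^ k))
    (fun k => by positivity) ?_ ?_
  · intro m n h
    rw [Gfun_mult.map_mul_of_coprime h, abs_mul]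
    push_cast
    rw [Real.mul_rpow (by positivity) (by positivity)]
    ring
  · apply Summable.mul_left
    have h1 := summable_pow_mul_geometric_of_norm_lt_one (R := ℝ) 9 (r := (2 : ℝ) ^ (-(3 / 8) : ℝ))
      (by rw [Real.norm_eq_abs, abs_of_pos hr0]; exact hr)
    have h2 := ((summable_nat_add_iff 1).2 h1).mul_right ((2 : ℝ) ^ (-(3 / 8) : ℝ))⁻¹
    refine h2.congr fun k => ?_
    push_cast
    field_simp
    ring
  · intro p hp k hk
    exact G_bound hp hk

end Summability

/-! ### Functions approximated by polynomials in the logarithm -/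

section PolyApprox

open Polynomial

/-- `F y = P(log y) + O(y^{e'})` for all `e' > e`, with `deg P ≤ d`. -/
def PA (d : ℕ) (e : ℝ) (F : ℝ → ℝ) : Prop :=
  ∃ P : ℝ[X], P.natDegree ≤ d ∧ ∀ e' : ℝ, e < e' → ∃ C : ℝ, 0 ≤ C ∧ ∀ y : ℝ, 1 ≤ y →
    |F y - P.eval (Real.log y)| ≤ C * y ^ e'

lemma PA.mono {d d' : ℕ} {e e' : ℝ} {F : ℝ → ℝ} (h : PA d e F) (hd : d ≤ d') (he : e ≤ e') :
    PA d' e' F := by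
  obtain ⟨P, hP, h⟩ := h
  exact ⟨P, hP.trans hd, fun s hs => h s (by linarith)⟩

lemma PA.congr {d : ℕ} {e : ℝ} {F G : ℝ → ℝ} (h : PA d e F) (hFG : ∀ y, 1 ≤ y → F y = G y) :
    PA d e G := by
  obtain ⟨P, hP, h⟩ := h
  refine ⟨P, hP, fun s hs => ?_⟩
  obtain ⟨C, hC, h⟩ := h s hs
  exact ⟨C, hC, fun y hy => by rw [← hFG y hy]; exact h y hy⟩

lemma PA.of_poly (P : ℝ[X]) {d : ℕ} (hd : P.natDegree ≤ d) (e : ℝ) :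
    PA d e (fun y => P.eval (Real.log y)) :=
  ⟨P, hd, fun _ _ => ⟨0, le_rfl, fun y _ => by simp⟩⟩

lemma PA.of_bound {e : ℝ} {F : ℝ → ℝ}
    (h : ∀ e' : ℝ, e < e' → ∃ C : ℝ, 0 ≤ C ∧ ∀ y : ℝ, 1 ≤ y → |F y| ≤ C * y ^ e') (d : ℕ) :
    PA d e F :=
  ⟨0, by simp, fun s hs => by simpa using h s hs⟩

lemma PA.add {d : ℕ} {e : ℝ} {F G : ℝ → ℝ} (hF : PA d e F) (hG : PA d e G) :
    PA d e (fun y => F y + G y) := by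
  obtain ⟨P, hP, hF⟩ := hF
  obtain ⟨Q, hQ, hG⟩ := hG
  refine ⟨P + Q, (natDegree_add_le _ _).trans (max_le hP hQ), fun s hs => ?_⟩
  obtain ⟨C, hC, h1⟩ := hF s hs
  obtain ⟨D, hD, h2⟩ := hG s hs
  refine ⟨C + D, by positivity, fun y hy => ?_⟩
  rw [eval_add, add_mul]
  calc |F y + G y - (eval (Real.log y) P + eval (Real.log y) Q)|
      = |(F y - eval (Real.log y) P) + (G y - eval (Real.log y) Q)| := by ring_nf
    _ ≤ _ := (abs_add_le _ _).trans (add_le_add (h1 y hy) (h2 y hy))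

lemma PA.const_mul {d : ℕ} {e : ℝ} {F : ℝ → ℝ} (c : ℝ) (hF : PA d e F) :
    PA d e (fun y => c * F y) := by
  obtain ⟨P, hP, hF⟩ := hF
  refine ⟨C c * P, (natDegree_C_mul_le _ _).trans hP, fun s hs => ?_⟩
  obtain ⟨D, hD, h1⟩ := hF s hs
  refine ⟨|c| * D, by positivity, fun y hy => ?_⟩
  rw [eval_mul, eval_C, ← mul_sub, abs_mul, mul_assoc]
  have := h1 y hy
  gcongr

lemma PA.sub {d : ℕ} {e : ℝ} {F G : ℝ → ℝ} (hF : PA d e F) (hG : PA d e G) :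
    PA d e (fun y => F y - G y) :=
  (hF.add (hG.const_mul (-1))).congr fun y _ => by ring

lemma PA.sum {ι : Type*} (s : Finset ι) {d : ℕ} {e : ℝ} {F : ι → ℝ → ℝ}
    (h : ∀ i ∈ s, PA d e (F i)) : PA d e (fun y => ∑ i ∈ s, F i y) := by
  induction s using Finset.induction_on with
  | empty =>
    simp only [Finset.sum_empty]
    exact (PA.of_poly 0 (by simp) e).congr fun y _ => by simp
  | insert a s ha ih =>
    simp only [Finset.sum_insert ha]
    exact (h a (Finset.mem_insert_self _ _)).add
      (ih fun i hi => h i (Finset.mem_insert_of_mem hi))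

lemma log_pow_bound (n : ℕ) {δ : ℝ} (hδ : 0 < δ) :
    ∃ C : ℝ, 0 ≤ C ∧ ∀ y : ℝ, 1 ≤ y → |Real.log y ^ n| ≤ C * y ^ δ := by
  rcases Nat.eq_zero_or_pos n with rfl | hn
  · exact ⟨1, zero_le_one, fun y hy => by simpa using Real.one_le_rpow hy hδ.le⟩
  have hn' : (0 : ℝ) < n := by exact_mod_cast hn
  refine ⟨(1 / (δ / n)) ^ n, by positivity, fun y hy => ?_⟩
  have h1 := Real.log_le_rpow_div (by linarith : 0 ≤ y) (show 0 < δ / n by positivity)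
  have h0 := Real.log_nonneg hy
  rw [abs_of_nonneg (by positivity)]
  calc Real.log y ^ n ≤ (y ^ (δ / n) / (δ / n)) ^ n := by gcongr
    _ = (1 / (δ / n)) ^ n * (y ^ (δ / n)) ^ n := by rw [← mul_pow]; ring_nf
    _ = _ := by
        rw [← Real.rpow_natCast (y ^ (δ / n)), ← Real.rpow_mul (by linarith)]
        congr 2
        field_simp

lemma poly_bound (P : ℝ[X]) {δ : ℝ} (hδ : 0 < δ) :
    ∃ C : ℝ, 0 ≤ C ∧ ∀ y : ℝ, 1 ≤ y → |P.eval (Real.log y)| ≤ C * y ^ δ := by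
  induction P using Polynomial.induction_on' with
  | add P Q hP hQ =>
    obtain ⟨C, hC, h1⟩ := hP
    obtain ⟨D, hD, h2⟩ := hQ
    refine ⟨C + D, by positivity, fun y hy => ?_⟩
    rw [eval_add, add_mul]
    exact (abs_add_le _ _).trans (add_le_add (h1 y hy) (h2 y hy))
  | monomial n a =>
    obtain ⟨C, hC, h⟩ := log_pow_bound n hδ
    refine ⟨|a| * C, by positivity, fun y hy => ?_⟩
    rw [eval_monomial, abs_mul, mul_assoc]
    have := h y hy
    gcongr

lemma PA.bound {d : ℕ} {e : ℝ} {F : ℝ → ℝ} (hF : PA d e F) (he : e ≤ 0) {δ : ℝ} (hδ : 0 < δ) :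
    ∃ C : ℝ, 0 ≤ C ∧ ∀ y : ℝ, 1 ≤ y → |F y| ≤ C * y ^ δ := by
  obtain ⟨P, hP, hF⟩ := hF
  obtain ⟨C, hC, h1⟩ := hF δ (by linarith)
  obtain ⟨D, hD, h2⟩ := poly_bound P hδ
  refine ⟨C + D, by positivity, fun y hy => ?_⟩
  have := abs_add_le (F y - P.eval (Real.log y)) (P.eval (Real.log y))
  rw [sub_add_cancel] at this
  rw [add_mul]
  linarith [h1 y hy, h2 y hy]

lemma PA.mul {d d' : ℕ} {e : ℝ} {F G : ℝ → ℝ} (he : e ≤ 0) (hF : PA d e F) (hG : PA d' e G) :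
    PA (d + d') e (fun y => F y * G y) := by
  have hGb := fun δ hδ => hG.bound he (δ := δ) hδ
  obtain ⟨P, hP, hF⟩ := hF
  obtain ⟨Q, hQ, hG⟩ := hG
  refine ⟨P * Q, natDegree_mul_le.trans (add_le_add hP hQ), fun s hs => ?_⟩
  have hδ : 0 < (s - e) / 2 := by linarith
  obtain ⟨C1, hC1, h1⟩ := hF (e + (s - e) / 2) (by linarith)
  obtain ⟨C2, hC2, h2⟩ := hG (e + (s - e) / 2) (by linarith)
  obtain ⟨C3, hC3, h3⟩ := hGb _ hδ
  obtain ⟨C4, hC4, h4⟩ := poly_bound P hδ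
  refine ⟨C1 * C3 + C4 * C2, by positivity, fun y hy => ?_⟩
  have hy0 : 0 < y := by linarith
  rw [eval_mul]
  have hs : y ^ s = y ^ (e + (s - e) / 2) * y ^ ((s - e) / 2) := by
    rw [← Real.rpow_add hy0]; ring_nf
  calc |F y * G y - eval (Real.log y) P * eval (Real.log y) Q|
      = |(F y - eval (Real.log y) P) * G y
          + eval (Real.log y) P * (G y - eval (Real.log y) Q)| := by ring_nf
    _ ≤ |F y - eval (Real.log y) P| * |G y|
          + |eval (Real.log y) P| * |G y - eval (Real.log y) Q| := by
        rw [← abs_mul, ← abs_mul]; exact abs_add_le _ _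
    _ ≤ (C1 * y ^ (e + (s - e) / 2)) * (C3 * y ^ ((s - e) / 2))
          + (C4 * y ^ ((s - e) / 2)) * (C2 * y ^ (e + (s - e) / 2)) := by
        have a1 := h1 y hy
        have a2 := h2 y hy
        have a3 := h3 y hy
        have a4 := h4 y hy
        gcongr
    _ = _ := by rw [hs]; ring

lemma PA.comp_rpow {d : ℕ} {e : ℝ} {F : ℝ → ℝ} (hF : PA d e F) {κ : ℝ} (hκ : 0 < κ) :
    PA d (κ * e) (fun y => F (y ^ κ)) := by
  obtain ⟨P, hP, hF⟩ := hF
  refine ⟨P.comp (C κ * X), ?_, fun s hs => ?_⟩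
  · refine natDegree_comp_le.trans ?_
    have : (C κ * X : ℝ[X]).natDegree ≤ 1 := (natDegree_C_mul_le _ _).trans natDegree_X_le
    nlinarith
  · obtain ⟨D, hD, h⟩ := hF (s / κ) (by rw [lt_div_iff₀ hκ]; linarith)
    refine ⟨D, hD, fun y hy => ?_⟩
    have hy0 : 0 < y := by linarith
    have := h (y ^ κ) (Real.one_le_rpow hy hκ.le)
    rw [← Real.rpow_mul hy0.le, mul_div_cancel₀ _ hκ.ne', Real.log_rpow hy0] at this
    simpa using this

lemma exists_antideriv (P : ℝ[X]) : ∃ Q : ℝ[X], Q.natDegree ≤ P.natDegree + 1 ∧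
    derivative Q = P := by
  refine ⟨∑ i ∈ Finset.range (P.natDegree + 1), C (P.coeff i / ((i : ℝ) + 1)) * X ^ (i + 1), ?_, ?_⟩
  · apply natDegree_sum_le_of_forall_le
    intro i hi
    have hi : i ≤ P.natDegree := by simpa [Nat.lt_succ_iff] using hi
    exact (natDegree_C_mul_X_pow_le _ _).trans (by lia)
  · rw [derivative_sum]
    conv_rhs => rw [P.as_sum_range_C_mul_X_pow]
    apply Finset.sum_congr rfl
    intro i _
    rw [derivative_C_mul_X_pow]
    push_cast
    have : (i : ℝ) + 1 ≠ 0 := by positivity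
    rw [div_mul_cancel₀ _ this]

lemma exists_solve (d : ℕ) : ∀ P : ℝ[X], P.natDegree ≤ d → ∃ Q : ℝ[X], Q.natDegree ≤ d ∧
    2 * Q + derivative Q = P := by
  induction d with
  | zero =>
    intro P hP
    refine ⟨C (1 / 2) * P, (natDegree_C_mul_le _ _).trans hP, ?_⟩
    rw [eq_C_of_natDegree_le_zero hP]
    simp only [derivative_mul, derivative_C, ← C_mul]
    rw [show (2 : ℝ[X]) = C 2 from rfl, ← C_mul]
    simp
  | succ d ih =>
    intro P hP
    obtain ⟨Q, hQ, h⟩ := ih (C (1 / 2) * derivative P)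
      ((natDegree_C_mul_le _ _).trans ((natDegree_derivative_le P).trans (by lia)))
    refine ⟨C (1 / 2) * P - Q, ?_, ?_⟩
    · exact (natDegree_sub_le _ _).trans
        (max_le ((natDegree_C_mul_le _ _).trans hP) (hQ.trans (by lia)))
    · rw [derivative_sub, derivative_C_mul]
      have h2 : (2 : ℝ[X]) * C (1 / 2) = 1 := by
        rw [show (2 : ℝ[X]) = C 2 from rfl, ← C_mul]; simp
      linear_combination P * h2 - h

end PolyApprox

/-! ### Integrals of functions approximated by polynomials in the logarithm -/

section PolyApproxIntegral

open Polynomial MeasureTheory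

lemma measurable_poly_log (P : ℝ[X]) : Measurable (fun t : ℝ => P.eval (Real.log t)) :=
  P.continuous.measurable.comp Real.measurable_log

lemma hasDerivAt_poly_log (P : ℝ[X]) {t : ℝ} (ht : 0 < t) :
    HasDerivAt (fun t : ℝ => P.eval (Real.log t)) ((derivative P).eval (Real.log t) / t) t := by
  have h := (P.hasDerivAt (Real.log t)).comp t (Real.hasDerivAt_log ht.ne')
  simpa [div_eq_mul_inv] using! h

lemma continuousOn_poly_log (P : ℝ[X]) (y : ℝ) :
    ContinuousOn (fun t : ℝ => P.eval (Real.log t)) (Set.Icc 1 y) := fun t ht =>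
  (hasDerivAt_poly_log P (by linarith [ht.1])).continuousAt.continuousWithinAt

lemma integral_poly_log_div (P : ℝ[X]) {y : ℝ} (hy : 1 ≤ y) :
    ∫ t in Set.Ioc 1 y, (derivative P).eval (Real.log t) / t
      = P.eval (Real.log y) - P.eval 0 := by
  rw [← intervalIntegral.integral_of_le hy]
  rw [intervalIntegral.integral_eq_sub_of_hasDerivAt
    (f := fun t => P.eval (Real.log t))]
  · simp
  · intro t ht
    rw [Set.uIcc_of_le hy] at ht
    exact hasDerivAt_poly_log P (by linarith [ht.1])
  · apply ContinuousOn.intervalIntegrable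
    rw [Set.uIcc_of_le hy]
    exact (continuousOn_poly_log _ y).div continuousOn_id (fun t ht => by
      have := ht.1
      linarith)

lemma integrableOn_poly_log_div (P : ℝ[X]) (y : ℝ) :
    IntegrableOn (fun t : ℝ => P.eval (Real.log t) / t) (Set.Icc 1 y) :=
  ContinuousOn.integrableOn_Icc ((continuousOn_poly_log _ y).div continuousOn_id (fun t ht => by
      have := ht.1
      linarith))

lemma integral_poly_log_mul (Q : ℝ[X]) {y : ℝ} (hy : 1 ≤ y) :
    ∫ t in Set.Ioc 1 y, t * (2 * Q + derivative Q).eval (Real.log t)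
      = y ^ 2 * Q.eval (Real.log y) - Q.eval 0 := by
  rw [← intervalIntegral.integral_of_le hy]
  rw [intervalIntegral.integral_eq_sub_of_hasDerivAt
    (f := fun t => t ^ 2 * Q.eval (Real.log t))]
  · simp
  · intro t ht
    rw [Set.uIcc_of_le hy] at ht
    have ht0 : 0 < t := by linarith [ht.1]
    have h := (hasDerivAt_pow 2 t).mul (hasDerivAt_poly_log Q ht0)
    convert! h using 1
    simp only [eval_add, eval_mul, eval_ofNat]
    field_simp
    push_cast
    ring
  · apply ContinuousOn.intervalIntegrable
    rw [Set.uIcc_of_le hy]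
    exact continuousOn_id.mul (continuousOn_poly_log _ y)

lemma PA.integral_div {d : ℕ} {e : ℝ} {F : ℝ → ℝ} (hF : PA d e F) (he : e < 0)
    (hm : Measurable F) : PA (d + 1) e (fun y => ∫ t in Set.Ioc 1 y, F t / t) := by
  obtain ⟨P, hP, hF⟩ := hF
  obtain ⟨R, hR, rfl⟩ := exists_antideriv P
  set E : ℝ → ℝ := fun t => F t - (derivative R).eval (Real.log t) with hE
  have hEm : Measurable E := hm.sub (measurable_poly_log _)
  have hdom : ∀ (s C : ℝ), (∀ t, 1 ≤ t → |E t| ≤ C * t ^ s) → ∀ t, 1 ≤ t →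
      ‖E t / t‖ ≤ C * t ^ (s - 1) := by
    intro s C h t ht
    have ht0 : 0 < t := by linarith
    rw [Real.norm_eq_abs, abs_div, abs_of_pos ht0, Real.rpow_sub_one ht0.ne', div_le_iff₀ ht0]
    calc |E t| ≤ C * t ^ s := h t ht
      _ = _ := by field_simp
  have hEint : IntegrableOn (fun t => E t / t) (Set.Ioi 1) := by
    obtain ⟨C, hC, h⟩ := hF (e / 2) (by linarith)
    have hI : IntegrableOn (fun t : ℝ => C * t ^ (e / 2 - 1)) (Set.Ioi 1) :=
      (integrableOn_Ioi_rpow_of_lt (by linarith) one_pos).const_mul C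
    refine Integrable.mono' hI (hEm.div measurable_id).aestronglyMeasurable ?_
    filter_upwards [ae_restrict_mem measurableSet_Ioi] with t ht
    exact hdom _ C h t (le_of_lt ht)
  set c := ∫ t in Set.Ioi 1, E t / t with hc
  refine ⟨R + C (c - R.eval 0), ?_, fun s hs => ?_⟩
  · refine (natDegree_add_le _ _).trans (max_le (hR.trans (by lia)) (by simp))
  set s' := min s (e / 2) with hs'
  have h1 : e < s' := lt_min hs (by linarith)
  have h2 : s' < 0 := (min_le_right _ _).trans_lt (by linarith)
  have h3 : s' ≤ s := min_le_left _ _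
  obtain ⟨D, hD, h⟩ := hF s' h1
  refine ⟨D / (-s'), div_nonneg hD (by linarith), fun y hy => ?_⟩
  have hy0 : 0 < y := by linarith
  have hsplit : ∫ t in Set.Ioc 1 y, F t / t =
      (∫ t in Set.Ioc 1 y, (derivative R).eval (Real.log t) / t) +
      ∫ t in Set.Ioc 1 y, E t / t := by
    rw [← integral_add]
    · congr 1
      ext t
      simp only [hE]
      ring
    · exact (integrableOn_poly_log_div _ y).mono_set Set.Ioc_subset_Icc_self
    · exact hEint.mono_set Set.Ioc_subset_Ioi_self
  have hsplit2 : c = (∫ t in Set.Ioc 1 y, E t / t) + ∫ t in Set.Ioi y, E t / t := by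
    rw [hc, ← Set.Ioc_union_Ioi_eq_Ioi hy]
    refine setIntegral_union Set.Ioc_disjoint_Ioi_same measurableSet_Ioi ?_ ?_
    · exact hEint.mono_set Set.Ioc_subset_Ioi_self
    · exact hEint.mono_set (Set.Ioi_subset_Ioi hy)
  have htail : |∫ t in Set.Ioi y, E t / t| ≤ D / (-s') * y ^ s' := by
    have := norm_integral_le_of_norm_le (μ := volume.restrict (Set.Ioi y))
      (f := fun t => E t / t) (g := fun t => D * t ^ (s' - 1))
      ((integrableOn_Ioi_rpow_of_lt (by linarith) hy0).const_mul D) (by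
        filter_upwards [ae_restrict_mem measurableSet_Ioi] with t ht
        exact hdom _ D h t (hy.trans (le_of_lt ht)))
    rw [integral_const_mul, integral_Ioi_rpow_of_lt (by linarith) hy0] at this
    rw [Real.norm_eq_abs] at this
    refine this.trans (le_of_eq ?_)
    rw [sub_add_cancel]
    have : s' ≠ 0 := h2.ne
    field_simp
  beta_reduce
  rw [hsplit, integral_poly_log_div R hy, eval_add, eval_C]
  have : (R.eval (Real.log y) - R.eval 0 + ∫ t in Set.Ioc 1 y, E t / t)
      - (R.eval (Real.log y) + (c - R.eval 0)) = - ∫ t in Set.Ioi y, E t / t := by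
    rw [hsplit2]; ring
  rw [this, abs_neg]
  refine htail.trans ?_
  have := Real.rpow_le_rpow_of_exponent_le hy h3
  have := div_nonneg hD (show 0 ≤ -s' by linarith)
  gcongr

lemma PA.integral_mul {d : ℕ} {e : ℝ} {F : ℝ → ℝ} (hF : PA d e F) (he : -1 ≤ e)
    (hm : Measurable F) : PA d e (fun y => y⁻¹ ^ 2 * ∫ t in Set.Ioc 1 y, t * F t) := by
  obtain ⟨P, hP, hF⟩ := hF
  obtain ⟨Q, hQ, rfl⟩ := exists_solve d P hP
  set E : ℝ → ℝ := fun t => F t - (2 * Q + derivative Q).eval (Real.log t) with hE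
  have hEm : Measurable E := hm.sub (measurable_poly_log _)
  refine ⟨Q, hQ, fun s hs => ?_⟩
  obtain ⟨D, hD, h⟩ := hF s hs
  refine ⟨D + |Q.eval 0|, by positivity, fun y hy => ?_⟩
  have hy0 : 0 < y := by linarith
  have hdom : ∀ t ∈ Set.Ioc 1 y, ‖t * E t‖ ≤ D * y ^ (s + 1) := by
    intro t ht
    have ht0 : 0 < t := by linarith [ht.1]
    rw [Real.norm_eq_abs, abs_mul, abs_of_pos ht0]
    calc t * |E t| ≤ t * (D * t ^ s) := by
          have := h t ht.1.le
          gcongr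
      _ = D * t ^ (s + 1) := by rw [Real.rpow_add_one ht0.ne']; ring
      _ ≤ _ := by
          have := Real.rpow_le_rpow ht0.le ht.2 (show 0 ≤ s + 1 by linarith)
          gcongr
  have hEint : IntegrableOn (fun t => t * E t) (Set.Ioc 1 y) := by
    refine Integrable.mono' (g := fun _ => D * y ^ (s + 1))
      (integrableOn_const (by simp))
      (measurable_id.mul hEm).aestronglyMeasurable ?_
    filter_upwards [ae_restrict_mem measurableSet_Ioc] with t ht
    exact hdom t ht
  have hsplit : ∫ t in Set.Ioc 1 y, t * F t =
      (∫ t in Set.Ioc 1 y, t * (2 * Q + derivative Q).eval (Real.log t)) +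
      ∫ t in Set.Ioc 1 y, t * E t := by
    rw [← integral_add]
    · congr 1
      ext t
      simp only [hE]
      ring
    · exact (ContinuousOn.integrableOn_Icc (continuousOn_id.mul
        (continuousOn_poly_log _ y))).mono_set Set.Ioc_subset_Icc_self
    · exact hEint
  have hb : |∫ t in Set.Ioc 1 y, t * E t| ≤ D * y ^ (s + 1) * y := by
    have := norm_setIntegral_le_of_norm_le_const (μ := volume) (s := Set.Ioc 1 y)
      (by simp) hdom
    rw [Real.norm_eq_abs] at this
    refine this.trans ?_
    rw [Real.volume_real_Ioc_of_le hy]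
    gcongr
    linarith
  beta_reduce
  rw [hsplit, integral_poly_log_mul Q hy]
  have e1 : y⁻¹ ^ 2 * (y ^ 2 * eval (Real.log y) Q - eval 0 Q + ∫ t in Set.Ioc 1 y, t * E t)
      - eval (Real.log y) Q = y⁻¹ ^ 2 * (∫ t in Set.Ioc 1 y, t * E t) - y⁻¹ ^ 2 * eval 0 Q := by
    field_simp
    ring
  rw [e1]
  have e2 : y⁻¹ ^ 2 ≤ y ^ s := by
    have : y⁻¹ ^ 2 = y ^ (-2 : ℝ) := by
      rw [Real.rpow_neg hy0.le, inv_pow]; norm_cast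
    rw [this]
    exact Real.rpow_le_rpow_of_exponent_le hy (by linarith)
  calc _ ≤ |y⁻¹ ^ 2 * (∫ t in Set.Ioc 1 y, t * E t)| + |y⁻¹ ^ 2 * eval 0 Q| := abs_sub _ _
    _ ≤ y⁻¹ ^ 2 * (D * y ^ (s + 1) * y) + y ^ s * |eval 0 Q| := by
        rw [abs_mul, abs_mul, abs_of_nonneg (show 0 ≤ y⁻¹ ^ 2 by positivity)]
        gcongr
    _ = _ := by
        rw [Real.rpow_add_one hy0.ne']
        field_simp

/-- Summatory function. -/
noncomputable def SF (c : ℕ → ℝ) (y : ℝ) : ℝ := ∑ k ∈ Finset.Icc 0 ⌊y⌋₊, c k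

lemma measurable_SF (c : ℕ → ℝ) : Measurable (SF c) :=
  (Measurable.of_discrete (f := fun n : ℕ => ∑ k ∈ Finset.Icc 0 n, c k)).comp Nat.measurable_floor

/-- Partial summation: from `∑ c(k)` to `∑ c(k) Q(log k)/k`. -/
lemma PA.abel_div {p : ℕ} {e : ℝ} {c : ℕ → ℝ} (hc : c 0 = 0) (he : e < 0)
    (h : PA p e (fun y => SF c y / y)) (Q : ℝ[X]) :
    PA (p + 1 + Q.natDegree) e (SF (fun k => Q.eval (Real.log k) / k * c k)) := by
  have hm : Measurable (fun y => SF c y / y) := (measurable_SF c).div measurable_id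
  have hd : ∀ t : ℝ, 1 ≤ t → HasDerivAt (fun t : ℝ => Q.eval (Real.log t) / t)
      ((derivative Q - Q).eval (Real.log t) / t / t) t := by
    intro t ht
    have ht0 : 0 < t := by linarith
    have := (hasDerivAt_poly_log Q ht0).div (hasDerivAt_id t) ht0.ne'
    convert! this using 1
    simp only [eval_sub, id]
    field_simp
  have hcont : ∀ y, IntegrableOn (deriv (fun t : ℝ => Q.eval (Real.log t) / t)) (Set.Icc 1 y) := by
    intro y
    have : ContinuousOn (fun t : ℝ => (derivative Q - Q).eval (Real.log t) / t / t)
        (Set.Icc 1 y) := by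
      refine ContinuousOn.div ((continuousOn_poly_log _ y).div continuousOn_id ?_)
        continuousOn_id ?_ <;>
      · intro t ht
        have := ht.1
        linarith
    refine (ContinuousOn.integrableOn_Icc this).congr_fun ?_ measurableSet_Icc
    intro t ht
    exact (hd t ht.1).deriv.symm
  have key : ∀ y, 1 ≤ y → SF (fun k => Q.eval (Real.log k) / k * c k) y =
      Q.eval (Real.log y) * (SF c y / y) -
        ∫ t in Set.Ioc 1 y, ((derivative Q - Q).eval (Real.log t) * (SF c t / t)) / t := by
    intro y hy
    have := sum_mul_eq_sub_integral_mul₀ (f := fun t : ℝ => Q.eval (Real.log t) / t) c hc y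
      (fun t ht => (hd t ht.1).differentiableAt) (hcont y)
    rw [SF, this]
    congr 1
    · rw [SF]; ring
    · refine setIntegral_congr_fun measurableSet_Ioc ?_
      intro t ht
      simp only
      rw [(hd t ht.1.le).deriv, SF]
      ring
  have h1 : PA (p + 1 + Q.natDegree) e (fun y => Q.eval (Real.log y) * (SF c y / y)) :=
    ((PA.of_poly Q le_rfl e).mul he.le h).mono (by lia) le_rfl
  have hdeg : (derivative Q - Q).natDegree ≤ Q.natDegree :=
    (natDegree_sub_le _ _).trans (max_le ((natDegree_derivative_le Q).trans (by lia)) le_rfl)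
  have h2 := ((PA.of_poly (derivative Q - Q) hdeg e).mul he.le h).integral_div he
    ((measurable_poly_log _).mul hm)
  exact (h1.sub (h2.mono (by lia) le_rfl)).congr fun y hy => (key y hy).symm

end PolyApproxIntegral

/-! ### Convolutions -/

section Convolution

open Polynomial

lemma SF_eq_Ioc {c : ℕ → ℝ} (hc : c 0 = 0) (y : ℝ) : SF c y = ∑ k ∈ Finset.Ioc 0 ⌊y⌋₊, c k := by
  rw [SF, Finset.Icc_eq_cons_Ioc (Nat.zero_le _), Finset.sum_cons, hc, zero_add]

lemma half_sum {a b : ℕ → ℝ} (ha : a 0 = 0) (hb : b 0 = 0) {X y : ℝ} (hXy : X ≤ y) :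
    ∑ x ∈ (Finset.Ioc 0 ⌊y⌋₊ ×ˢ Finset.Ioc 0 ⌊y⌋₊).filter (fun x => x.1 * x.2 ≤ ⌊y⌋₊),
      (if x.1 ≤ ⌊X⌋₊ then a x.1 * b x.2 else 0) =
    SF (fun k => a k * SF b (y / k)) X := by
  rw [SF_eq_Ioc (by simp [ha])]
  set N := ⌊y⌋₊ with hN
  have hle : ⌊X⌋₊ ≤ N := Nat.floor_le_floor hXy
  rw [Finset.sum_filter, Finset.sum_product]
  have hsub : Finset.Ioc 0 ⌊X⌋₊ ⊆ Finset.Ioc 0 N := Finset.Ioc_subset_Ioc_right hle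
  symm
  rw [← Finset.sum_subset_zero_on_sdiff hsub (g := fun k => ∑ m ∈ Finset.Ioc 0 N,
    if k * m ≤ N then (if k ≤ ⌊X⌋₊ then a k * b m else 0) else 0)]
  · intro k hk
    simp only [Finset.mem_sdiff, Finset.mem_Ioc, not_and, not_le] at hk
    apply Finset.sum_eq_zero
    intro m _
    have := hk.2 hk.1.1
    rw [if_neg (not_le.mpr this), ite_self]
  · intro k hk
    rw [Finset.mem_Ioc] at hk
    simp only [hk.2, if_true]
    rw [SF_eq_Ioc hb, Finset.mul_sum, ← Finset.sum_filter, Nat.floor_div_natCast, ← hN]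
    apply Finset.sum_congr _ (fun _ _ => rfl)
    ext m
    simp only [Finset.mem_Ioc, Finset.mem_filter]
    rw [Nat.le_div_iff_mul_le hk.1, mul_comm m k]
    constructor
    · rintro ⟨h1, h2⟩
      exact ⟨⟨h1, by nlinarith [hk.1]⟩, h2⟩
    · rintro ⟨⟨h1, h2⟩, h3⟩
      exact ⟨h1, h3⟩

/-- The Dirichlet hyperbola identity. -/
lemma hyperbola (a b : ArithmeticFunction ℝ) {K M y : ℝ} (hK : 1 ≤ K) (hM : 1 ≤ M)
    (hKM : K * M = y) :
    SF (⇑(a * b)) y = SF (fun k => a k * SF b (y / k)) K + SF (fun k => b k * SF a (y / k)) M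
      - SF a K * SF b M := by
  have hKy : K ≤ y := by nlinarith
  have hMy : M ≤ y := by nlinarith
  rw [← half_sum (ArithmeticFunction.map_zero) (ArithmeticFunction.map_zero) hKy,
    ← half_sum (ArithmeticFunction.map_zero) (ArithmeticFunction.map_zero) hMy]
  rw [SF_eq_Ioc (ArithmeticFunction.map_zero), ArithmeticFunction.sum_Ioc_mul_eq_sum_prod_filter]
  set N := ⌊y⌋₊ with hN
  set P := (Finset.Ioc 0 N ×ˢ Finset.Ioc 0 N).filter (fun x => x.1 * x.2 ≤ N) with hP
  have h2 : ∑ x ∈ P, (if x.1 ≤ ⌊M⌋₊ then b x.1 * a x.2 else 0) =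
      ∑ x ∈ P, (if x.2 ≤ ⌊M⌋₊ then a x.1 * b x.2 else 0) := by
    refine Finset.sum_nbij' Prod.swap Prod.swap ?_ ?_ ?_ ?_ ?_
    · intro x hx
      simp only [hP, Finset.mem_filter, Finset.mem_product, Prod.fst_swap, Prod.snd_swap] at hx ⊢
      exact ⟨⟨hx.1.2, hx.1.1⟩, by rw [mul_comm]; exact hx.2⟩
    · intro x hx
      simp only [hP, Finset.mem_filter, Finset.mem_product, Prod.fst_swap, Prod.snd_swap] at hx ⊢
      exact ⟨⟨hx.1.2, hx.1.1⟩, by rw [mul_comm]; exact hx.2⟩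
    · simp
    · simp
    · intro x hx
      simp [mul_comm]
  have h3 : SF a K * SF b M =
      ∑ x ∈ P, (if x.1 ≤ ⌊K⌋₊ ∧ x.2 ≤ ⌊M⌋₊ then a x.1 * b x.2 else 0) := by
    rw [SF_eq_Ioc (ArithmeticFunction.map_zero), SF_eq_Ioc (ArithmeticFunction.map_zero),
      Finset.sum_mul_sum, ← Finset.sum_product', ← Finset.sum_filter]
    apply Finset.sum_congr _ (fun _ _ => rfl)
    have hKMN : ⌊K⌋₊ * ⌊M⌋₊ ≤ N := by
      apply Nat.le_floor
      push_cast
      rw [← hKM]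
      exact mul_le_mul (Nat.floor_le (by linarith)) (Nat.floor_le (by linarith))
        (by positivity) (by linarith)
    have e1 : ⌊K⌋₊ ≤ N := Nat.floor_le_floor hKy
    have e2 : ⌊M⌋₊ ≤ N := Nat.floor_le_floor hMy
    ext ⟨k, m⟩
    simp only [hP, Finset.mem_filter, Finset.mem_product, Finset.mem_Ioc]
    constructor
    · rintro ⟨⟨h1, h2⟩, h3, h4⟩
      exact ⟨⟨⟨⟨h1, h2.trans e1⟩, h3, h4.trans e2⟩, (Nat.mul_le_mul h2 h4).trans hKMN⟩, h2, h4⟩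
    · rintro ⟨⟨⟨⟨h1, -⟩, h3, -⟩, -⟩, h2, h4⟩
      exact ⟨⟨h1, h2⟩, h3, h4⟩
  rw [h2, h3, ← Finset.sum_add_distrib, ← Finset.sum_sub_distrib]
  apply Finset.sum_congr rfl
  rintro ⟨k, m⟩ hx
  simp only [hP, Finset.mem_filter, Finset.mem_product, Finset.mem_Ioc] at hx
  simp only
  by_cases c1 : k ≤ ⌊K⌋₊ <;> by_cases c2 : m ≤ ⌊M⌋₊ <;> simp only [c1, c2] <;> simp
  exfalso
  have f1 : K < k := Nat.lt_of_floor_lt (not_le.mp c1)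
  have f2 : M < m := Nat.lt_of_floor_lt (not_le.mp c2)
  have f3 : ((k * m : ℕ) : ℝ) ≤ y := by
    refine le_trans ?_ (Nat.floor_le (show 0 ≤ y by linarith))
    exact_mod_cast hx.2
  push_cast at f3
  nlinarith

lemma poly_eval_sub (Q : ℝ[X]) (u v : ℝ) : Q.eval (u - v) =
    ∑ i ∈ Finset.range (Q.natDegree + 1), u ^ i * ((hasseDeriv i Q).comp (-X)).eval v := by
  rw [sub_eq_add_neg, ← taylor_eval, eval_eq_sum_range, natDegree_taylor]
  apply Finset.sum_congr rfl
  intro i _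
  rw [taylor_coeff, eval_comp, mul_comm]
  simp

lemma PA.main_half {r : ℕ} {e : ℝ} {a : ℕ → ℝ} (he : e ≤ 0)
    (h : ∀ Q : ℝ[X], PA (r + Q.natDegree) e (SF (fun k => Q.eval (Real.log k) / k * a k)))
    (Q : ℝ[X]) {κ : ℝ} (hκ : 0 < κ) :
    PA (r + Q.natDegree) (κ * e)
      (fun y => SF (fun k => a k / k * Q.eval (Real.log y - Real.log k)) (y ^ κ)) := by
  have key : ∀ y : ℝ, SF (fun k => a k / k * Q.eval (Real.log y - Real.log k)) (y ^ κ) =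
      ∑ i ∈ Finset.range (Q.natDegree + 1), (X ^ i : ℝ[X]).eval (Real.log y) *
        SF (fun k => ((hasseDeriv i Q).comp (-X)).eval (Real.log k) / k * a k) (y ^ κ) := by
    intro y
    simp only [SF, Finset.mul_sum]
    rw [Finset.sum_comm]
    apply Finset.sum_congr rfl
    intro k _
    rw [poly_eval_sub, Finset.mul_sum]
    apply Finset.sum_congr rfl
    intro i _
    rw [eval_pow, eval_X]
    ring
  refine PA.congr (PA.sum (Finset.range (Q.natDegree + 1)) (fun i hi => ?_))
    (fun y _ => (key y).symm)
  have hi : i ≤ Q.natDegree := by simpa [Nat.lt_succ_iff] using hi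
  have hdeg : ((hasseDeriv i Q).comp (-X)).natDegree ≤ Q.natDegree - i := by
    refine natDegree_comp_le.trans ?_
    rw [natDegree_neg, natDegree_X, mul_one]
    exact natDegree_hasseDeriv_le Q i
  have hm : κ * e ≤ 0 := mul_nonpos_of_nonneg_of_nonpos hκ.le he
  exact ((PA.of_poly (X ^ i) (natDegree_X_pow_le i) (κ * e)).mul hm ((h _).comp_rpow hκ)).mono
    (by lia) le_rfl

lemma PA.half_aux {r q : ℕ} {e f g : ℝ} {a b : ℕ → ℝ} (ha : a 0 = 0) (he : e ≤ 0)
    (h : ∀ Q : ℝ[X], PA (r + Q.natDegree) e (SF (fun k => Q.eval (Real.log k) / k * a k)))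
    (hb : PA q f (fun y => SF b y / y)) {κ : ℝ} (hκ : 0 < κ) (hκ1 : κ ≤ 1) (hg : κ * e ≤ g)
    (herr : ∀ s' : ℝ, g < s' → ∃ s : ℝ, f < s ∧ ∃ D : ℝ, 0 ≤ D ∧ ∀ y : ℝ, 1 ≤ y →
      SF (fun k => |a k| / k * (y / k) ^ s) (y ^ κ) ≤ D * y ^ s') :
    PA (r + q) g (fun y => y⁻¹ * SF (fun k => a k * SF b (y / k)) (y ^ κ)) := by
  obtain ⟨Q, hQ, hb⟩ := hb
  have hmain := (PA.main_half he h Q hκ).mono (Nat.add_le_add_left hQ r) hg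
  refine PA.congr (hmain.add (PA.of_bound
    (F := fun y => SF (fun k => a k / k * (SF b (y / k) / (y / k) - Q.eval (Real.log (y / k))))
      (y ^ κ)) ?_ (r + q))) ?_
  · intro s' hs'
    obtain ⟨s, hs, D, hD, hD'⟩ := herr s' hs'
    obtain ⟨C, hC, hC'⟩ := hb s hs
    refine ⟨C * D, by positivity, fun y hy => ?_⟩
    have hy0 : 0 < y := by linarith
    rw [mul_assoc]
    refine le_trans ?_ (mul_le_mul_of_nonneg_left (hD' y hy) hC)
    simp only [SF]
    rw [Finset.mul_sum]
    refine (Finset.abs_sum_le_sum_abs _ _).trans (Finset.sum_le_sum fun k hk => ?_)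
    rcases Nat.eq_zero_or_pos k with rfl | hk0
    · simp
    have hk0' : (0 : ℝ) < k := by exact_mod_cast hk0
    have hky : (k : ℝ) ≤ y := by
      rw [Finset.mem_Icc] at hk
      have h1 : (k : ℝ) ≤ y ^ κ := (Nat.le_floor_iff (by positivity)).mp hk.2
      refine h1.trans ?_
      calc y ^ κ ≤ y ^ (1 : ℝ) := Real.rpow_le_rpow_of_exponent_le hy hκ1
        _ = y := Real.rpow_one y
    have := hC' (y / k) (by rw [le_div_iff₀ hk0']; linarith)
    rw [abs_mul, abs_div, abs_of_pos hk0']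
    calc |a k| / k * |SF b (y / k) / (y / k) - eval (Real.log (y / k)) Q|
        ≤ |a k| / k * (C * (y / k) ^ s) := by
          gcongr
      _ = _ := by ring
  · intro y hy
    have hy0 : 0 < y := by linarith
    simp only [SF]
    rw [Finset.mul_sum, ← Finset.sum_add_distrib]
    apply Finset.sum_congr rfl
    intro k hk
    rcases Nat.eq_zero_or_pos k with rfl | hk0
    · simp [ha]
    have hk0' : (0 : ℝ) < k := by exact_mod_cast hk0
    rw [Real.log_div hy0.ne' hk0'.ne']
    field_simp
    ring

lemma PA.half {p q : ℕ} {e f g : ℝ} {a b : ℕ → ℝ} (ha : a 0 = 0) (ha' : ∀ k, 0 ≤ a k)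
    (he : e < 0) (hf : f < 0) (h : PA p e (fun y => SF a y / y))
    (hb : PA q f (fun y => SF b y / y)) {κ : ℝ} (hκ : 0 < κ) (hκ1 : κ < 1) (hg : κ * e ≤ g)
    (hg' : (1 - κ) * f ≤ g) :
    PA (p + q + 1) g (fun y => y⁻¹ * SF (fun k => a k * SF b (y / k)) (y ^ κ)) := by
  refine (PA.half_aux ha he.le (fun Q => PA.abel_div ha he h Q) hb hκ hκ1.le hg ?_).mono
    (by lia) le_rfl
  intro s' hs'
  set η := s' - g with hη
  have hη0 : 0 < η := by linarith
  set s := min (f + η / 2) (f / 2) with hs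
  have hs1 : f < s := lt_min (by linarith) (by linarith)
  have hs2 : s < 0 := (min_le_right _ _).trans_lt (by linarith)
  have hs3 : s ≤ f + η / 2 := min_le_left _ _
  obtain ⟨D, hD, hD'⟩ := (PA.abel_div ha he h 1).bound he.le (show 0 < η / 2 by linarith)
  refine ⟨s, hs1, D, hD, fun y hy => ?_⟩
  have hy0 : 0 < y := by linarith
  have hyk : 1 ≤ y ^ κ := Real.one_le_rpow hy hκ.le
  have b1 := hD' (y ^ κ) hyk
  have b2 : SF (fun k => |a k| / k * (y / k) ^ s) (y ^ κ) ≤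
      y ^ ((1 - κ) * s) * SF (fun k => (1 : ℝ[X]).eval (Real.log k) / k * a k) (y ^ κ) := by
    simp only [SF]
    rw [Finset.mul_sum]
    refine Finset.sum_le_sum fun k hk => ?_
    rcases Nat.eq_zero_or_pos k with rfl | hk0
    · simp
    have hk0' : (0 : ℝ) < k := by exact_mod_cast hk0
    rw [Finset.mem_Icc] at hk
    have h1 : (k : ℝ) ≤ y ^ κ := (Nat.le_floor_iff (by positivity)).mp hk.2
    have h2 : y ^ (1 - κ) ≤ y / k := by
      rw [le_div_iff₀ hk0']
      calc y ^ (1 - κ) * k ≤ y ^ (1 - κ) * y ^ κ := by gcongr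
        _ = y := by rw [← Real.rpow_add hy0]; simp
    have h3 : (y / k) ^ s ≤ y ^ ((1 - κ) * s) := by
      rw [Real.rpow_mul hy0.le]
      exact Real.rpow_le_rpow_of_nonpos (by positivity) h2 hs2.le
    rw [abs_of_nonneg (ha' k), eval_one]
    have h4 := ha' k
    calc a k / k * (y / k) ^ s ≤ a k / k * y ^ ((1 - κ) * s) := by gcongr
      _ = _ := by ring
  refine b2.trans ?_
  calc y ^ ((1 - κ) * s) * SF (fun k => (1 : ℝ[X]).eval (Real.log k) / k * a k) (y ^ κ)
      ≤ y ^ ((1 - κ) * s) * (D * (y ^ κ) ^ (η / 2)) := by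
        have := le_trans (le_abs_self _) b1
        gcongr
    _ = D * y ^ ((1 - κ) * s + κ * (η / 2)) := by
        rw [← Real.rpow_mul hy0.le, Real.rpow_add hy0]; ring
    _ ≤ D * y ^ s' := by
        have : (1 - κ) * s ≤ (1 - κ) * (f + η / 2) :=
          mul_le_mul_of_nonneg_left hs3 (by linarith)
        have := Real.rpow_le_rpow_of_exponent_le hy
          (show (1 - κ) * s + κ * (η / 2) ≤ s' by nlinarith)
        gcongr

/-- Convolution of two nonnegative functions. -/
lemma PA.conv {p q : ℕ} {e f g : ℝ} {a b : ArithmeticFunction ℝ} (ha : ∀ k, 0 ≤ a k)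
    (hb : ∀ k, 0 ≤ b k) (he : e < 0) (hf : f < 0) (h : PA p e (fun y => SF a y / y))
    (h' : PA q f (fun y => SF b y / y)) {κ : ℝ} (hκ : 0 < κ) (hκ1 : κ < 1) (hg : κ * e ≤ g)
    (hg' : (1 - κ) * f ≤ g) (hg0 : g ≤ 0) :
    PA (p + q + 1) g (fun y => SF (⇑(a * b)) y / y) := by
  have t1 := PA.half (ArithmeticFunction.map_zero) ha he hf h h' hκ hκ1 hg hg'
  have t2 := PA.half (ArithmeticFunction.map_zero) hb hf he h' h
    (show 0 < 1 - κ by linarith) (by linarith) hg' (by simpa using hg)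
  have t3 := ((h.comp_rpow hκ).mono le_rfl hg).mul hg0
    ((h'.comp_rpow (show 0 < 1 - κ by linarith)).mono le_rfl hg')
  refine ((t1.add (t2.mono (by lia) le_rfl)).sub (t3.mono (by lia) le_rfl)).congr fun y hy => ?_
  have hy0 : 0 < y := by linarith
  have hKM : y ^ κ * y ^ (1 - κ) = y := by rw [← Real.rpow_add hy0]; simp
  rw [hyperbola a b (Real.one_le_rpow hy hκ.le)
    (Real.one_le_rpow hy (show 0 ≤ 1 - κ by linarith)) hKM]
  have e1 : SF a (y ^ κ) / y ^ κ * (SF b (y ^ (1 - κ)) / y ^ (1 - κ)) =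
      SF a (y ^ κ) * SF b (y ^ (1 - κ)) / y := by
    rw [div_mul_div_comm, hKM]
  rw [e1]
  ring

end Convolution

/-! ### Conclusion -/

section Conclusion

open Polynomial MeasureTheory

lemma zetaR_nonneg (k : ℕ) : 0 ≤ zetaR k := by
  rcases eq_or_ne k 0 with rfl | hk
  · simp
  · rw [zetaR_apply hk]; exact zero_le_one

lemma conv_nonneg {a b : ArithmeticFunction ℝ} (ha : ∀ k, 0 ≤ a k) (hb : ∀ k, 0 ≤ b k) (k : ℕ) :
    0 ≤ (a * b) k := by
  rw [ArithmeticFunction.mul_apply]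
  exact Finset.sum_nonneg fun x _ => mul_nonneg (ha _) (hb _)

lemma sqLift_idR_nonneg (k : ℕ) : 0 ≤ sqLift idR k := by
  by_cases hk : IsSquare k
  · obtain ⟨r, rfl⟩ := hk
    rw [sqLift_sq]
    simp [idR]
  · rw [sqLift_not _ hk]

lemma PA_zeta : PA 0 (-1) (fun y => SF zetaR y / y) := by
  refine ⟨C 1, by simp, fun s hs => ⟨1, zero_le_one, fun y hy => ?_⟩⟩
  have hy0 : 0 < y := by linarith
  have h1 : SF zetaR y = (⌊y⌋₊ : ℝ) := by
    rw [SF_eq_Ioc (by simp)]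
    rw [Finset.sum_congr rfl (fun k hk => zetaR_apply (by rw [Finset.mem_Ioc] at hk; lia))]
    simp
  have h2 := Nat.floor_le hy0.le
  have h3 := Nat.lt_floor_add_one y
  beta_reduce
  rw [h1, eval_C, one_mul]
  have h4 : y ^ (-1 : ℝ) ≤ y ^ s := Real.rpow_le_rpow_of_exponent_le hy hs.le
  rw [Real.rpow_neg_one] at h4
  refine le_trans ?_ h4
  have : (⌊y⌋₊ : ℝ) / y - 1 = (⌊y⌋₊ - y) * y⁻¹ := by field_simp
  rw [this, abs_mul, abs_of_pos (inv_pos.mpr hy0)]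
  have : |(⌊y⌋₊ : ℝ) - y| ≤ 1 := by rw [abs_le]; constructor <;> linarith
  have := inv_pos.mpr hy0
  nlinarith

lemma sum_sqLift_idR (N : ℕ) :
    ∑ k ∈ Finset.Icc 0 N, sqLift idR k = (N.sqrt : ℝ) * (N.sqrt + 1) / 2 := by
  have h1 : ∑ r ∈ Finset.range (N.sqrt + 1), (r : ℝ) = (N.sqrt : ℝ) * (N.sqrt + 1) / 2 := by
    generalize N.sqrt = m
    induction m with
    | zero => simp
    | succ m ih =>
      rw [Finset.sum_range_succ, ih]
      push_cast
      ring
  rw [← h1]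
  have h2 : ∀ r ∈ Finset.range (N.sqrt + 1), (r : ℝ) = sqLift idR (r * r) := by
    intro r _
    rw [sqLift_sq]
    simp [idR]
  rw [Finset.sum_congr rfl h2]
  rw [← Finset.sum_image (g := fun r : ℕ => r * r) (f := fun k => sqLift idR k)]
  · symm
    apply Finset.sum_subset
    · intro k hk
      simp only [Finset.mem_image, Finset.mem_range] at hk
      obtain ⟨r, hr, rfl⟩ := hk
      simp only [Finset.mem_Icc, zero_le, true_and]
      exact Nat.le_sqrt.mp (by lia)
    · intro k hk hk'
      apply sqLift_not
      rintro ⟨r, rfl⟩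
      apply hk'
      simp only [Finset.mem_image, Finset.mem_range]
      refine ⟨r, ?_, rfl⟩
      rw [Nat.lt_succ_iff, Nat.le_sqrt]
      exact (Finset.mem_Icc.mp hk).2
  · intro r _ s _ h
    simp only at h
    exact Nat.mul_self_inj.mp h

lemma PA_sq : PA 0 (-(1 / 2)) (fun y => SF (sqLift idR) y / y) := by
  refine ⟨C (1 / 2), by simp, fun s hs => ⟨1, zero_le_one, fun y hy => ?_⟩⟩
  have hy0 : 0 < y := by linarith
  set n := Nat.sqrt ⌊y⌋₊ with hn
  have h1 : SF (sqLift idR) y = (n : ℝ) * (n + 1) / 2 := sum_sqLift_idR _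
  have h2 : (n : ℝ) * n ≤ y := by
    refine le_trans ?_ (Nat.floor_le hy0.le)
    exact_mod_cast Nat.sqrt_le ⌊y⌋₊
  have h3 : y < ((n : ℝ) + 1) * (n + 1) := by
    have : ⌊y⌋₊ < (n + 1) * (n + 1) := Nat.lt_succ_sqrt ⌊y⌋₊
    have := Nat.lt_of_floor_lt this
    exact_mod_cast this
  have h5 : (n : ℝ) ≤ √y := Real.le_sqrt_of_sq_le (by nlinarith)
  have h6 : 1 ≤ √y := Real.one_le_sqrt.mpr hy
  have hn0 : (0 : ℝ) ≤ n := by positivity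
  beta_reduce
  rw [h1, eval_C, one_mul]
  have h4 : y ^ (-(1 / 2) : ℝ) ≤ y ^ s := Real.rpow_le_rpow_of_exponent_le hy hs.le
  refine le_trans ?_ h4
  have e1 : y ^ (-(1 / 2) : ℝ) = √y * y⁻¹ := by
    rw [Real.sqrt_eq_rpow, ← Real.rpow_neg_one, ← Real.rpow_add hy0]
    norm_num
  have e2 : (n : ℝ) * (n + 1) / 2 / y - 1 / 2 = ((n : ℝ) * (n + 1) - y) / 2 * y⁻¹ := by
    field_simp
  rw [e1, e2, abs_mul, abs_of_pos (inv_pos.mpr hy0)]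
  have : |((n : ℝ) * (n + 1) - y) / 2| ≤ √y := by rw [abs_le]; constructor <;> nlinarith
  have := inv_pos.mpr hy0
  gcongr

lemma PA_zz : PA 1 (-(1 / 2)) (fun y => SF (⇑(zetaR * zetaR)) y / y) :=
  PA.conv (κ := 1 / 2) zetaR_nonneg zetaR_nonneg (by norm_num) (by norm_num) PA_zeta PA_zeta
    (by norm_num) (by norm_num) (by norm_num) (by norm_num) (by norm_num)

lemma PA_tau4 : PA 3 (-(1 / 4)) (fun y => SF tau4 y / y) :=
  PA.conv (κ := 1 / 2) (conv_nonneg zetaR_nonneg zetaR_nonneg)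
    (conv_nonneg zetaR_nonneg zetaR_nonneg) (by norm_num) (by norm_num) PA_zz PA_zz
    (by norm_num) (by norm_num) (by norm_num) (by norm_num) (by norm_num)

lemma tau4_nonneg (k : ℕ) : 0 ≤ tau4 k :=
  conv_nonneg (conv_nonneg zetaR_nonneg zetaR_nonneg) (conv_nonneg zetaR_nonneg zetaR_nonneg) k

lemma PA_M : PA 4 (-(1 / 6)) (fun y => SF Mfun y / y) :=
  PA.conv (κ := 2 / 3) tau4_nonneg sqLift_idR_nonneg (by norm_num) (by norm_num) PA_tau4 PA_sq
    (by norm_num) (by norm_num) (by norm_num) (by norm_num) (by norm_num)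

lemma PA_G_log (Q : ℝ[X]) : PA (0 + Q.natDegree) (-(1 / 8))
    (SF (fun k => Q.eval (Real.log k) / k * Gfun k)) := by
  set u : ℕ → ℝ := fun k => Q.eval (Real.log k) / k * Gfun k with hu
  set w : ℕ → ℝ := fun n => |Gfun n| * (n : ℝ) ^ (-(7 / 8) : ℝ) with hw
  have hws : Summable w := G_summable
  have hw0 : ∀ n, 0 ≤ w n := fun n => by positivity
  have hbd : ∀ δ : ℝ, 0 < δ → ∃ D : ℝ, 0 ≤ D ∧ ∀ k : ℕ, 1 ≤ k →
      |u k| ≤ D * (k : ℝ) ^ (δ - 1 / 8) * w k := by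
    intro δ hδ
    obtain ⟨D, hD, h⟩ := poly_bound Q hδ
    refine ⟨D, hD, fun k hk => ?_⟩
    have hk1 : (1 : ℝ) ≤ k := by exact_mod_cast hk
    have hk0 : (0 : ℝ) < k := by linarith
    have h1 := h k hk1
    simp only [hu, hw]
    rw [abs_mul, abs_div, abs_of_pos hk0]
    calc |Q.eval (Real.log k)| / k * |Gfun k| ≤ (D * (k : ℝ) ^ δ) / k * |Gfun k| := by gcongr
      _ = D * ((k : ℝ) ^ (δ - 1 / 8) * (k : ℝ) ^ (-(7 / 8) : ℝ)) * |Gfun k| := by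
          rw [← Real.rpow_add hk0, show δ - 1 / 8 + -(7 / 8) = δ - 1 by ring,
            Real.rpow_sub_one hk0.ne']
          ring
      _ = _ := by ring
  have hus : Summable u := by
    obtain ⟨D, hD, h⟩ := hbd (1 / 8) (by norm_num)
    refine Summable.of_norm_bounded (hws.mul_left D) (fun k => ?_)
    rw [Real.norm_eq_abs]
    rcases Nat.eq_zero_or_pos k with rfl | hk
    · simp [hu, hw]
    · simpa using h k hk
  refine ⟨C (∑' k, u k), by simp, fun s hs => ?_⟩
  set δ := min (s + 1 / 8) (1 / 8) with hδ
  have hδ0 : 0 < δ := lt_min (by linarith) (by norm_num)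
  have hδ1 : δ ≤ s + 1 / 8 := min_le_left _ _
  have hδ2 : δ ≤ 1 / 8 := min_le_right _ _
  obtain ⟨D, hD, h⟩ := hbd δ hδ0
  refine ⟨D * ∑' k, w k, mul_nonneg hD (tsum_nonneg hw0), fun y hy => ?_⟩
  have hy0 : 0 < y := by linarith
  set N := ⌊y⌋₊ with hN
  have hsum := hus.sum_add_tsum_nat_add (N + 1)
  have hSF : SF u y = ∑ i ∈ Finset.range (N + 1), u i := by
    rw [SF, Finset.range_eq_Ico]
    rfl
  rw [eval_C, hSF, ← hsum]
  have hwt : Summable (fun i => w (i + (N + 1))) := (summable_nat_add_iff (N + 1)).mpr hws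
  have htail : |∑' i, u (i + (N + 1))| ≤ D * y ^ (δ - 1 / 8) * ∑' i, w (i + (N + 1)) := by
    rw [← Real.norm_eq_abs]
    refine tsum_of_norm_bounded ((hwt.hasSum).mul_left (D * y ^ (δ - 1 / 8))) (fun i => ?_)
    rw [Real.norm_eq_abs]
    refine (h (i + (N + 1)) (by lia)).trans ?_
    have hle : y ≤ ((i + (N + 1) : ℕ) : ℝ) := by
      have := Nat.lt_floor_add_one y
      rw [← hN] at this
      push_cast
      have : (0 : ℝ) ≤ i := by positivity
      linarith
    have := Real.rpow_le_rpow_of_nonpos hy0 hle (show δ - 1 / 8 ≤ 0 by linarith)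
    have := hw0 (i + (N + 1))
    gcongr
  have hwle : ∑' i, w (i + (N + 1)) ≤ ∑' k, w k := by
    have := hws.sum_add_tsum_nat_add (N + 1)
    have := Finset.sum_nonneg (fun i (_ : i ∈ Finset.range (N + 1)) => hw0 i)
    linarith
  rw [sub_add_cancel_left, abs_neg]
  refine htail.trans ?_
  have e1 := Real.rpow_le_rpow_of_exponent_le hy (show δ - 1 / 8 ≤ s by linarith)
  have e2 : 0 ≤ ∑' k, w k := tsum_nonneg hw0
  calc D * y ^ (δ - 1 / 8) * ∑' i, w (i + (N + 1)) ≤ D * y ^ s * ∑' k, w k := by gcongr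
    _ = _ := by ring

lemma SF_conv (a b : ArithmeticFunction ℝ) (y : ℝ) :
    SF (⇑(a * b)) y = SF (fun k => a k * SF b (y / k)) y := by
  rw [SF_eq_Ioc (ArithmeticFunction.map_zero), ArithmeticFunction.sum_Ioc_mul_eq_sum_sum,
    SF_eq_Ioc (by simp)]
  apply Finset.sum_congr rfl
  intro k _
  rw [SF_eq_Ioc (ArithmeticFunction.map_zero), Nat.floor_div_natCast]

lemma PA_F : PA 4 (-(1 / 8)) (fun y => SF Ffun y / y) := by
  have h := PA.half_aux (a := Gfun) (g := -(1 / 8)) (κ := 1) (by simp) (by norm_num) PA_G_log PA_M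
    one_pos le_rfl (by norm_num) ?_
  · refine (h.mono (by lia) le_rfl).congr fun y hy => ?_
    rw [Real.rpow_one, Ffun_eq, SF_conv]
    ring
  · intro s' hs'
    refine ⟨-(1 / 8), by norm_num, ∑' n : ℕ, |Gfun n| * (n : ℝ) ^ (-(7 / 8) : ℝ),
      tsum_nonneg (fun n => by positivity), fun y hy => ?_⟩
    have hy0 : 0 < y := by linarith
    have h1 : SF (fun k => |Gfun k| / k * (y / k) ^ (-(1 / 8) : ℝ)) (y ^ (1 : ℝ)) =
        (∑ k ∈ Finset.Icc 0 ⌊y ^ (1 : ℝ)⌋₊, |Gfun k| * (k : ℝ) ^ (-(7 / 8) : ℝ))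
          * y ^ (-(1 / 8) : ℝ) := by
      rw [SF, Finset.sum_mul]
      apply Finset.sum_congr rfl
      intro k _
      rcases Nat.eq_zero_or_pos k with rfl | hk
      · simp
      have hk0 : (0 : ℝ) < k := by exact_mod_cast hk
      rw [Real.div_rpow hy0.le hk0.le, show (-(7 / 8) : ℝ) = -1 - -(1 / 8) by norm_num,
        Real.rpow_sub hk0, Real.rpow_neg_one]
      ring
    rw [h1]
    have h2 := G_summable.sum_le_tsum (Finset.Icc 0 ⌊y ^ (1 : ℝ)⌋₊) (fun n _ => by positivity)
    have h3 := Real.rpow_le_rpow_of_exponent_le hy hs'.le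
    have h4 : 0 ≤ ∑' n : ℕ, |Gfun n| * (n : ℝ) ^ (-(7 / 8) : ℝ) :=
      tsum_nonneg (fun n => by positivity)
    gcongr

lemma PA_nF : PA 4 (-(1 / 8)) (fun y => SF (fun n => (n : ℝ) * Ffun n) y / y ^ 2) := by
  have hm : Measurable (fun y => SF Ffun y / y) := (measurable_SF _).div measurable_id
  refine (PA_F.sub (PA_F.integral_mul (by norm_num) hm)).congr fun y hy => ?_
  have hy0 : 0 < y := by linarith
  have := sum_mul_eq_sub_integral_mul₀ (f := fun t : ℝ => t) Ffun (ArithmeticFunction.map_zero) y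
    (fun t _ => differentiableAt_id) (by simp)
  have h2 : ∫ t in Set.Ioc 1 y, t * (SF Ffun t / t) =
      ∫ t in Set.Ioc 1 y, deriv (fun t : ℝ => t) t * ∑ k ∈ Finset.Icc 0 ⌊t⌋₊, Ffun k := by
    refine setIntegral_congr_fun measurableSet_Ioc ?_
    intro t ht
    have ht0 : t ≠ 0 := by linarith [ht.1]
    simp only [SF]
    field_simp
    simp
  rw [h2, SF, SF, this]
  field_simp

end Conclusion

theorem stmt1 : ∃ a : ℕ → ℝ, ∀ ε : ℝ, 0 < ε →
    (fun x : ℝ => (T₃ x : ℝ) -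
        x ^ ((2 : ℝ) / 3) * ∑ j ∈ Finset.range 5, a j * Real.log x ^ j)
      =O[Filter.atTop] (fun x : ℝ => x ^ ((5 : ℝ) / 8 + ε)) := by
  obtain ⟨P, hP, h⟩ := PA_nF.comp_rpow (show (0 : ℝ) < 1 / 3 by norm_num)
  refine ⟨P.coeff, fun ε hε => ?_⟩
  obtain ⟨C, hC, h⟩ := h (-(1 / 24) + ε) (by linarith)
  refine Asymptotics.IsBigO.of_bound C ?_
  filter_upwards [Filter.eventually_ge_atTop 1] with x hx
  have hx0 : 0 < x := by linarith
  have h1 := h x hx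
  rw [Polynomial.eval_eq_sum_range' (Nat.lt_succ_of_le hP)] at h1
  have h2 : (x ^ ((1 : ℝ) / 3)) ^ 2 = x ^ ((2 : ℝ) / 3) := by
    rw [← Real.rpow_natCast, ← Real.rpow_mul hx0.le]; norm_num
  have h3 : SF (fun n => (n : ℝ) * Ffun n) (x ^ ((1 : ℝ) / 3)) = (T₃ x : ℝ) := (T3_eq x hx).symm
  beta_reduce at h1
  rw [h2, h3] at h1
  have h4 : 0 < x ^ ((2 : ℝ) / 3) := by positivity
  rw [Real.norm_eq_abs, Real.norm_of_nonneg (by positivity)]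
  have h5 : x ^ ((5 : ℝ) / 8 + ε) = x ^ ((2 : ℝ) / 3) * x ^ (-(1 / 24) + ε) := by
    rw [← Real.rpow_add hx0]; congr 1; ring
  rw [h5]
  calc |(T₃ x : ℝ) - x ^ ((2 : ℝ) / 3) * ∑ j ∈ Finset.range 5, P.coeff j * Real.log x ^ j|
      = x ^ ((2 : ℝ) / 3) * |(T₃ x : ℝ) / x ^ ((2 : ℝ) / 3)
          - ∑ j ∈ Finset.range 5, P.coeff j * Real.log x ^ j| := by
        rw [← abs_of_pos h4, ← abs_mul, abs_of_pos h4, mul_sub, mul_div_cancel₀ _ h4.ne']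
    _ ≤ x ^ ((2 : ℝ) / 3) * (C * x ^ (-(1 / 24) + ε)) := by gcongr
    _ = _ := by ring
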